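/- Suppose the lattice operator H is stable and admits a lattice Green's function 𝒢. Let p ∈ ℕ₀, let α < −1 be a real number, let c > 0, and let u ∈ 𝓗¹ satisfy |H[u](ℓ)| ≤ c⟨ℓ⟩^{−d−p}(log⟨ℓ⟩)^α for all ℓ ∈ Λ, and 𝓘_i[u] = 0 for i = 0,…,p−1. Then for each j ∈ {1,2} there is a constant C such that |D^j u(ℓ)| ≤ C⟨ℓ⟩^{2−d−p−j} for all ℓ ∈ Λ (no logarithmic factor). For j ≥ 3 the same bound holds provided additionally |D^m H[u](ℓ)| ≤ c⟨ℓ⟩^{−d−p−m}(log⟨ℓ⟩)^α for all ℓ and m = 1,…,j−2. -/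

import Mathlib

noncomputable section

open scoped BigOperators
open MeasureTheory Filter Topology

namespace Defect

abbrev Vec (n : ℕ) : Type := Fin n → ℝ

/-- Euclidean norm of a vector in `ℝ^n`. -/
def enorm {n : ℕ} (v : Vec n) : ℝ := Real.sqrt (∑ i, (v i) ^ 2)

/-- `⟨x⟩ := |x| + 2`. -/
def ang {n : ℕ} (v : Vec n) : ℝ := enorm v + 2

def dotV {n : ℕ} (x y : Vec n) : ℝ := ∑ i, x i * y i

/-- Matrix-vector product for a plain `Fin N → Fin N → ℝ` matrix. -/
def mulV {N : ℕ} (M : Fin N → Fin N → ℝ) (v : Vec N) : Vec N := fun i => ∑ j, M i j * v j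

/-- Euclidean (Frobenius) norm of an `N × N` array. -/
def mnorm {N : ℕ} (M : Fin N → Fin N → ℝ) : ℝ := Real.sqrt (∑ i, ∑ j, (M i j) ^ 2)

/-- The lattice point `A z` for `z ∈ ℤ^d`. -/
def latticePt (d : ℕ) (A : Matrix (Fin d) (Fin d) ℝ) (z : Fin d → ℤ) : Vec d :=
  fun i => ∑ j, A i j * (z j : ℝ)

/-- The Bravais lattice `Λ = A ℤ^d`. -/
def Lattice (d : ℕ) (A : Matrix (Fin d) (Fin d) ℝ) : Set (Vec d) :=
  Set.range (latticePt d A)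

/-- First-order finite difference `D_ρ u (ℓ) = u(ℓ+ρ) - u(ℓ)`. -/
def D1 {d : ℕ} {M : Type} [AddCommGroup M] (ρ : Vec d) (u : Vec d → M) (ℓ : Vec d) : M :=
  u (ℓ + ρ) - u ℓ

/-- Iterated finite difference `D_{ρ₁} ⋯ D_{ρ_j} u (ℓ)` (closed form). -/
def Dmulti {d : ℕ} {M : Type} [AddCommGroup M] [Module ℝ M] {j : ℕ}
    (ρs : Fin j → Vec d) (u : Vec d → M) (ℓ : Vec d) : M :=
  ∑ S : Finset (Fin j), ((-1 : ℝ) ^ (j - S.card)) • u (ℓ + ∑ i ∈ S, ρs i)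

/-- `|Du(ℓ)|²`, the squared Euclidean norm of the stencil of first differences. -/
def Dnorm1Sq {d N : ℕ} (R : Finset (Vec d)) (u : Vec d → Vec N) (ℓ : Vec d) : ℝ :=
  ∑ ρ ∈ R, (enorm (D1 ρ u ℓ)) ^ 2

/-- `|D^j u(ℓ)|`, the Euclidean norm of the array `(D_{ρ⃗} u(ℓ))_{ρ⃗ ∈ R^j}`. -/
def DnormJ {d N : ℕ} (R : Finset (Vec d)) (j : ℕ) (u : Vec d → Vec N) (ℓ : Vec d) : ℝ :=
  Real.sqrt (∑ ρs : Fin j → {x // x ∈ R},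
    (enorm (Dmulti (fun i => (ρs i : Vec d)) u ℓ)) ^ 2)

/-- The linearized lattice operator
`H[u](ℓ) = ∑_{σ,ρ∈R} (C_{σρ} D_ρ u(ℓ-σ) - C_{σρ} D_ρ u(ℓ))`. -/
def Hop (d N : ℕ) (R : Finset (Vec d)) (C : Vec d → Vec d → Fin N → Fin N → ℝ)
    (u : Vec d → Vec N) (ℓ : Vec d) : Vec N :=
  ∑ σ ∈ R, ∑ ρ ∈ R, (mulV (C σ ρ) (D1 ρ u (ℓ - σ)) - mulV (C σ ρ) (D1 ρ u ℓ))

/-- `u ∈ 𝓗¹`. -/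
def InH1 {d N : ℕ} (A : Matrix (Fin d) (Fin d) ℝ) (R : Finset (Vec d))
    (u : Vec d → Vec N) : Prop :=
  Summable fun z : Fin d → ℤ => Dnorm1Sq R u (latticePt d A z)

/-- `u ∈ 𝓗ᶜ` : the stencil `Du` has bounded support on the lattice. -/
def InHc {d N : ℕ} (A : Matrix (Fin d) (Fin d) ℝ) (R : Finset (Vec d))
    (u : Vec d → Vec N) : Prop :=
  ∃ rad : ℝ, ∀ z : Fin d → ℤ, rad ≤ enorm (latticePt d A z) →
    ∀ ρ ∈ R, D1 ρ u (latticePt d A z) = 0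

/-- Stability of the lattice operator `H`. -/
def IsStable (d N : ℕ) (A : Matrix (Fin d) (Fin d) ℝ) (R : Finset (Vec d))
    (C : Vec d → Vec d → Fin N → Fin N → ℝ) : Prop :=
  ∃ c₀ : ℝ, 0 < c₀ ∧ ∀ u : Vec d → Vec N, InHc A R u →
    c₀ * (∑' z : Fin d → ℤ, Dnorm1Sq R u (latticePt d A z)) ≤
      ∑' z : Fin d → ℤ, ∑ σ ∈ R, ∑ ρ ∈ R,
        dotV (D1 σ u (latticePt d A z)) (mulV (C σ ρ) (D1 ρ u (latticePt d A z)))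

/-- `k`-th column of a matrix-valued function. -/
def col {d N : ℕ} (G : Vec d → Fin N → Fin N → ℝ) (k : Fin N) : Vec d → Vec N :=
  fun x i => G x i k

/-- `|D^j 𝒢(ℓ)|` for matrix-valued `𝒢`. -/
def DnormJmat {d N : ℕ} (R : Finset (Vec d)) (j : ℕ)
    (G : Vec d → Fin N → Fin N → ℝ) (ℓ : Vec d) : ℝ :=
  Real.sqrt (∑ k : Fin N, (DnormJ R j (col G k) ℓ) ^ 2)

/-- `𝒢` is a lattice Green's function for `H`. -/
def IsLatticeGreen (d N : ℕ) (A : Matrix (Fin d) (Fin d) ℝ) (R : Finset (Vec d))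
    (C : Vec d → Vec d → Fin N → Fin N → ℝ) (G : Vec d → Fin N → Fin N → ℝ) : Prop :=
  (∀ (k : Fin N) (z : Fin d → ℤ),
      Hop d N R C (col G k) (latticePt d A z) =
        if latticePt d A z = 0 then Pi.single k 1 else 0) ∧
  (∀ j : ℕ, 1 ≤ j → ∃ cj : ℝ, ∀ z : Fin d → ℤ,
      DnormJmat R j G (latticePt d A z) ≤
        cj * ang (latticePt d A z) ^ ((2 : ℝ) - d - j))

/-- A symmetric array `b ∈ (ℝ^{Fin d})^{⊙ i}`. -/
def SymArr {d i : ℕ} (b : (Fin i → Fin d) → ℝ) : Prop :=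
  ∀ (π : Equiv.Perm (Fin i)) (σv : Fin i → Fin d), b (σv ∘ π) = b σv

/-- `b : D_𝒮^i f`, a multipole term built from the basis `s`. -/
def multipole (d N : ℕ) (s : Fin d → Vec d) (i : ℕ) (b : (Fin i → Fin d) → ℝ)
    (f : Vec d → Vec N) : Vec d → Vec N :=
  fun ℓ => ∑ σv : Fin i → Fin d, b σv • Dmulti (fun m => s (σv m)) f ℓ

/-- Iterated partial derivative `∂_{j₁} ⋯ ∂_{j_i} f (x)`. -/
def pderivMulti {d : ℕ} (i : ℕ) (js : Fin i → Fin d) (f : Vec d → ℝ) (x : Vec d) : ℝ :=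
  iteratedFDeriv ℝ i f x (fun m => Pi.single (js m) (1 : ℝ))

/-- `a : ∇^i f (x)` for a tensor `a ∈ (ℝ^d)^{⊗ i}`. -/
def aContract {d : ℕ} (i : ℕ) (a : (Fin i → Fin d) → ℝ) (f : Vec d → ℝ) (x : Vec d) : ℝ :=
  ∑ js : Fin i → Fin d, a js * pderivMulti i js f x

/-- Elementary tensor `σ⃗^⊗` as an array. -/
def tensorPow {d k : ℕ} (σs : Fin k → Vec d) : (Fin k → Fin d) → ℝ :=
  fun js => ∏ m, σs m (js m)

/-- Symmetric tensor product `σ⃗^⊙`. -/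
def symTensor {d k : ℕ} (σs : Fin k → Vec d) : (Fin k → Fin d) → ℝ :=
  fun js => ((k.factorial : ℝ))⁻¹ * ∑ π : Equiv.Perm (Fin k), tensorPow (σs ∘ π) js

/-- A symmetric tensor (array invariant under index permutations). -/
def SymTensor {d k : ℕ} (T : (Fin k → Fin d) → ℝ) : Prop :=
  ∀ (π : Equiv.Perm (Fin k)) (js : Fin k → Fin d), T (js ∘ π) = T js

/-- `∂V/∂g_ρ (gs)` as a vector in `ℝ^N`. -/
def gradV {d N : ℕ} (R : Finset (Vec d)) (V : ({x // x ∈ R} → Vec N) → ℝ)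
    (ρ : {x // x ∈ R}) (gs : {x // x ∈ R} → Vec N) : Vec N :=
  fun i => fderiv ℝ V gs (Pi.single ρ (Pi.single i 1))

/-- The finite-difference stencil `Du(ℓ) = (D_ρ u(ℓ))_{ρ ∈ R}`. -/
def Dstencil {d N : ℕ} (R : Finset (Vec d)) (u : Vec d → Vec N) (ℓ : Vec d) :
    {x // x ∈ R} → Vec N :=
  fun ρ => D1 (ρ : Vec d) u ℓ

/-- `C_{σρ} = ∂²V/∂g_σ ∂g_ρ (0)`. -/
def CofV {d N : ℕ} (R : Finset (Vec d)) (V : ({x // x ∈ R} → Vec N) → ℝ)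
    (σ ρ : Vec d) (i j : Fin N) : ℝ :=
  if hσ : σ ∈ R then
    if hρ : ρ ∈ R then
      iteratedFDeriv ℝ 2 V 0
        ![Pi.single ⟨σ, hσ⟩ (Pi.single i 1), Pi.single ⟨ρ, hρ⟩ (Pi.single j 1)]
    else 0
  else 0

/-- Summand of the first variation `δE(u)[v]` at a site. -/
def deltaEsite {d N : ℕ} (R : Finset (Vec d)) (V : ({x // x ∈ R} → Vec N) → ℝ)
    (u v : Vec d → Vec N) (ℓ : Vec d) : ℝ :=
  ∑ ρ ∈ R.attach, dotV (gradV R V ρ (Dstencil R u ℓ)) (D1 (ρ : Vec d) v ℓ)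

/-- The pointwise atomistic force `δE(u)(ℓ)`. -/
def deltaEpt {d N : ℕ} (R : Finset (Vec d)) (V : ({x // x ∈ R} → Vec N) → ℝ)
    (u : Vec d → Vec N) (ℓ : Vec d) : Vec N :=
  ∑ ρ ∈ R.attach,
    (gradV R V ρ (Dstencil R u (ℓ - (ρ : Vec d))) - gradV R V ρ (Dstencil R u ℓ))

/-- Point symmetry of the site potential. -/
def PointSym {d N : ℕ} (R : Finset (Vec d)) (hRsym : ∀ ρ ∈ R, -ρ ∈ R)
    (V : ({x // x ∈ R} → Vec N) → ℝ) : Prop :=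
  ∀ gs : {x // x ∈ R} → Vec N,
    V (fun ρ => -(gs ⟨-(ρ : Vec d), hRsym _ ρ.2⟩)) = V gs

/-- The Cauchy–Born elasticity tensor `ℂ_{iajb}`. -/
def CB {d N : ℕ} (A : Matrix (Fin d) (Fin d) ℝ) (R : Finset (Vec d))
    (C : Vec d → Vec d → Fin N → Fin N → ℝ)
    (i : Fin N) (a : Fin d) (j : Fin N) (b : Fin d) : ℝ :=
  (|A.det|)⁻¹ * ∑ ρ ∈ R, ∑ σ ∈ R, C ρ σ i j * ρ a * σ b

/-!
Write `f = H[u]`. The gradient is represented as a convolution, `D_ρ u = D_ρ 𝒢 * f`: in the Green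
identity for `u` and `D_ρ 𝒢`, tested with a `C^{1,1}` cutoff at scale `R`, the drift-free stencil
makes the commutator error of size `R⁻² |z|^(1 - d)`, and `u` grows sublinearly because its
gradient, being square summable, tends to zero; hence the error vanishes as `R → ∞`.

The convolution is split according to the distance from the singularity of the kernel. Away from it,
the Newton interpolation polynomial of the kernel at the origin is subtracted, which costs nothing
because the moments of `f` vanish, and gains `|ℓ|^(-p)` times the `p`-th absolute moment of `f`.
This moment is finite for `α < -1`, since on the dyadic shell `|z| ~ 2 ^ k` the weight
`⟨z⟩^(-d) (log ⟨z⟩)^α` has mass of order `k ^ α`. Near the singularity, differences are moved onto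
`f` by summation by parts until the kernel is of size `|k|^(-d)`; its sum over `|k| ≤ |ℓ|` is a
logarithm, compensated by the logarithmic factor of `f`.
-/

/-! ### Iterated differences -/

section IteratedDifference

variable {M E : Type*} [AddCommGroup M] [AddCommGroup E]

instance fwdDiff_leftCommutative :
    LeftCommutative (fwdDiff : M → (M → E) → M → E) where
  left_comm r s f := by
    funext z
    simp only [fwdDiff, add_right_comm z s r]
    abel

/-- The iterated difference `D_{r₁} ⋯ D_{r_n} f`. The directions form a multiset because difference
operators commute. -/
def iterDiff (s : Multiset M) (f : M → E) : M → E := s.foldr fwdDiff f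

@[simp]
lemma iterDiff_zero (f : M → E) : iterDiff 0 f = f := Multiset.foldr_zero _ _

lemma iterDiff_cons (r : M) (s : Multiset M) (f : M → E) :
    iterDiff (r ::ₘ s) f = fwdDiff r (iterDiff s f) :=
  Multiset.foldr_cons _ _ _ _

lemma iterDiff_fwdDiff (r : M) (s : Multiset M) (f : M → E) :
    iterDiff s (fwdDiff r f) = fwdDiff r (iterDiff s f) := by
  induction s using Multiset.induction_on with
  | empty => simp only [iterDiff_zero]
  | cons a s ih => rw [iterDiff_cons, iterDiff_cons, ih, fwdDiff_leftCommutative.left_comm]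

lemma iterDiff_cons_eq_iterDiff_fwdDiff (r : M) (s : Multiset M) (f : M → E) :
    iterDiff (r ::ₘ s) f = iterDiff s (fwdDiff r f) := by
  rw [iterDiff_cons, iterDiff_fwdDiff]

lemma iterDiff_add (s t : Multiset M) (f : M → E) :
    iterDiff (s + t) f = iterDiff s (iterDiff t f) :=
  Multiset.foldr_add _ _ _ _

lemma iterDiff_comp_const_sub (s : Multiset M) (g : M → E) (l m : M) :
    iterDiff s (fun k => g (l - k)) m = iterDiff (s.map (-·)) g (l - m) := by
  induction s using Multiset.induction_on generalizing m with
  | empty => simp only [Multiset.map_zero, iterDiff_zero]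
  | cons a s ih =>
    rw [Multiset.map_cons, iterDiff_cons, iterDiff_cons]
    simp only [fwdDiff, ih, show l - (m + a) = l - m + -a by abel]

lemma iterDiff_map_apply_eq_sum_powerset {κ : Type*} (r : κ → M) (f : M → ℝ) (T : Finset κ)
    (z : M) :
    iterDiff (T.val.map r) f z =
      ∑ S ∈ T.powerset, (-1 : ℝ) ^ (T.card - S.card) * f (z + ∑ i ∈ S, r i) := by
  classical
  induction T using Finset.induction_on generalizing z with
  | empty => simp
  | insert a T ha ih =>
    have ha_of_subset : ∀ S ∈ T.powerset, a ∉ S := fun S hS h => ha (Finset.mem_powerset.mp hS h)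
    rw [Finset.insert_val_of_notMem ha, Multiset.map_cons, iterDiff_cons,
      Finset.sum_powerset_insert ha, fwdDiff, ih, ih, sub_eq_neg_add, ← Finset.sum_neg_distrib,
      Finset.card_insert_of_notMem ha]
    refine congrArg₂ (· + ·) (Finset.sum_congr rfl fun S hS => ?_)
      (Finset.sum_congr rfl fun S hS => ?_)
    · rw [Nat.sub_add_comm (Finset.card_le_card (Finset.mem_powerset.mp hS)), pow_succ]
      ring
    · rw [Finset.card_insert_of_notMem (ha_of_subset S hS), Finset.sum_insert (ha_of_subset S hS),
        Nat.add_sub_add_right, add_assoc]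

end IteratedDifference

/-! ### From a generating set of directions to all directions -/

section Directions

variable {M : Type*} [AddCommGroup M]

/-- A weight is slowly varying if every translation costs at most a constant factor. The filter `⊤`
makes `=O[⊤]` a bound at every point, not only an asymptotic one. -/
def SlowlyVarying (B : M → ℝ) : Prop := ∀ r, (fun z => B (z + r)) =O[⊤] B

lemma fwdDiff_zero_direction (f : M → ℝ) : fwdDiff 0 f = 0 := by
  funext z
  simp [fwdDiff]

lemma fwdDiff_add_direction (x y : M) (f : M → ℝ) :
    fwdDiff (x + y) f = fun z => fwdDiff x f (z + y) + fwdDiff y f z := by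
  funext z
  simp only [fwdDiff, show z + (x + y) = z + y + x by abel]
  ring

lemma fwdDiff_neg_direction (x : M) (f : M → ℝ) :
    fwdDiff (-x) f = fun z => -fwdDiff x f (z + -x) := by
  funext z
  simp only [fwdDiff, neg_add_cancel_right, neg_sub]

lemma isBigO_fwdDiff_of_closure_eq_top {S : Set M} (hS : AddSubgroup.closure S = ⊤) {B : M → ℝ}
    (hB : SlowlyVarying B) {f : M → ℝ} (hf : ∀ r ∈ S, fwdDiff r f =O[⊤] B) (r : M) :
    fwdDiff r f =O[⊤] B := by
  have shift {F : M → ℝ} (hF : F =O[⊤] B) (y : M) : (fun z => F (z + y)) =O[⊤] B :=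
    (hF.comp_tendsto tendsto_top).trans (hB y)
  induction (hS ▸ AddSubgroup.mem_top r : r ∈ AddSubgroup.closure S) using
    AddSubgroup.closure_induction with
  | mem x hx => exact hf x hx
  | zero => rw [fwdDiff_zero_direction]; exact Asymptotics.isBigO_zero B ⊤
  | add x y _ _ hx hy => rw [fwdDiff_add_direction]; exact (shift hx y).add hy
  | neg x _ hx => rw [fwdDiff_neg_direction]; exact (shift hx (-x)).neg_left

lemma isBigO_iterDiff_of_closure_eq_top {S : Set M} (hS : AddSubgroup.closure S = ⊤) {B : M → ℝ}
    (hB : SlowlyVarying B) {n : ℕ} {f : M → ℝ}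
    (hf : ∀ s : Multiset M, s.card = n → (∀ r ∈ s, r ∈ S) → iterDiff s f =O[⊤] B)
    {s : Multiset M} (hs : s.card = n) : iterDiff s f =O[⊤] B := by
  induction n generalizing f s with
  | zero => exact hf s hs (by simp [Multiset.card_eq_zero.mp hs])
  | succ n ih =>
    obtain ⟨r, hr⟩ := Multiset.card_pos_iff_exists_mem.mp (by omega : 0 < s.card)
    obtain ⟨s, rfl⟩ := Multiset.exists_cons_of_mem hr
    have hsn : s.card = n := by simpa using hs
    rw [iterDiff_cons]
    refine isBigO_fwdDiff_of_closure_eq_top hS hB (fun q hq => ?_) r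
    rw [← iterDiff_fwdDiff]
    refine ih (fun t ht htS => ?_) hsn
    rw [← iterDiff_cons_eq_iterDiff_fwdDiff]
    exact hf _ (by simp [ht]) (Multiset.forall_mem_cons.mpr ⟨hq, htS⟩)

lemma tendsto_fwdDiff_of_closure_eq_top {S : Set M} (hS : AddSubgroup.closure S = ⊤) {f : M → ℝ}
    (hf : ∀ r ∈ S, Tendsto (fwdDiff r f) cofinite (𝓝 0)) (r : M) :
    Tendsto (fwdDiff r f) cofinite (𝓝 0) := by
  have shift {F : M → ℝ} (hF : Tendsto F cofinite (𝓝 0)) (y : M) :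
      Tendsto (fun z => F (z + y)) cofinite (𝓝 0) :=
    hF.comp (add_left_injective y).tendsto_cofinite
  induction (hS ▸ AddSubgroup.mem_top r : r ∈ AddSubgroup.closure S) using
    AddSubgroup.closure_induction with
  | mem x hx => exact hf x hx
  | zero => rw [fwdDiff_zero_direction]; exact tendsto_const_nhds
  | add x y _ _ hx hy => rw [fwdDiff_add_direction]; simpa using (shift hx y).add hy
  | neg x _ hx => rw [fwdDiff_neg_direction]; simpa using (shift hx (-x)).neg

end Directions

/-! ### Weights on `ℤ^d` -/

section Weight

variable {d : ℕ}

/-- The `ℓ¹` norm on `ℤ^d`, for which unit steps change the norm by exactly one. -/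
def l1Norm (z : Fin d → ℤ) : ℕ := ∑ i, (z i).natAbs

/-- The counterpart of `⟨ℓ⟩` in lattice coordinates. -/
def weight (z : Fin d → ℤ) : ℝ := l1Norm z + 2

lemma l1Norm_add_le (x y : Fin d → ℤ) : l1Norm (x + y) ≤ l1Norm x + l1Norm y := by
  unfold l1Norm
  rw [← Finset.sum_add_distrib]
  exact Finset.sum_le_sum fun i _ => Int.natAbs_add_le _ _

@[simp]
lemma l1Norm_neg (x : Fin d → ℤ) : l1Norm (-x) = l1Norm x := by simp [l1Norm]

lemma l1Norm_eq_zero {x : Fin d → ℤ} : l1Norm x = 0 ↔ x = 0 := by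
  simp [l1Norm, funext_iff]

lemma natAbs_le_l1Norm (x : Fin d → ℤ) (i : Fin d) : (x i).natAbs ≤ l1Norm x :=
  Finset.single_le_sum (f := fun i => (x i).natAbs) (fun _ _ => Nat.zero_le _) (Finset.mem_univ i)

lemma cast_l1Norm (z : Fin d → ℤ) : (l1Norm z : ℝ) = ∑ i, |(z i : ℝ)| := by
  simp [l1Norm, Nat.cast_natAbs]

lemma abs_le_l1Norm (x : Fin d → ℤ) (i : Fin d) : |(x i : ℝ)| ≤ l1Norm x := by
  rw [cast_l1Norm]
  exact Finset.single_le_sum (f := fun i => |(x i : ℝ)|) (fun _ _ => abs_nonneg _)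
    (Finset.mem_univ i)

lemma two_le_weight (x : Fin d → ℤ) : 2 ≤ weight x :=
  le_add_of_nonneg_left (Nat.cast_nonneg _)

lemma weight_pos (x : Fin d → ℤ) : 0 < weight x := two_pos.trans_le (two_le_weight x)

@[simp]
lemma weight_neg (x : Fin d → ℤ) : weight (-x) = weight x := by simp [weight]

lemma weight_add_le (x y : Fin d → ℤ) : weight (x + y) ≤ (1 + l1Norm y) * weight x := by
  have h : (l1Norm (x + y) : ℝ) ≤ l1Norm x + l1Norm y := by exact_mod_cast l1Norm_add_le x y
  unfold weight
  nlinarith [(l1Norm x).cast_nonneg (α := ℝ), (l1Norm y).cast_nonneg (α := ℝ),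
    mul_nonneg (l1Norm x).cast_nonneg (l1Norm y).cast_nonneg (α := ℝ)]

lemma weight_le_weight_add (x y : Fin d → ℤ) : weight x ≤ (1 + l1Norm y) * weight (x + y) := by
  simpa using weight_add_le (x + y) (-y)

lemma log_weight_pos (x : Fin d → ℤ) : 0 < Real.log (weight x) :=
  Real.log_pos (one_lt_two.trans_le (two_le_weight x))

lemma l1Norm_sub_ge (l k : Fin d → ℤ) : (l1Norm l : ℝ) - l1Norm k ≤ l1Norm (l - k) := by
  have := l1Norm_add_le (l - k) k
  rw [sub_add_cancel] at this
  rw [sub_le_iff_le_add]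
  exact_mod_cast this

lemma finite_l1Norm_le (n : ℕ) : {z : Fin d → ℤ | l1Norm z ≤ n}.Finite := by
  refine (Set.finite_Icc (fun _ => -(n : ℤ)) (fun _ => (n : ℤ))).subset fun z hz => ?_
  have hz i : (z i).natAbs ≤ n := (natAbs_le_l1Norm z i).trans hz
  exact ⟨fun i => by have := hz i; simp only; omega, fun i => by have := hz i; simp only; omega⟩

lemma finite_weight_le (X : ℝ) : {z : Fin d → ℤ | weight z ≤ X}.Finite := by
  refine (finite_l1Norm_le ⌊X⌋₊).subset fun z hz => Nat.le_floor ?_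
  exact (le_add_of_nonneg_right zero_le_two).trans hz

lemma norm_weight (x : Fin d → ℤ) : ‖weight x‖ = weight x := Real.norm_of_nonneg (weight_pos x).le

lemma norm_log_weight (x : Fin d → ℤ) : ‖Real.log (weight x)‖ = Real.log (weight x) :=
  Real.norm_of_nonneg (log_weight_pos x).le

lemma inv_weight_pow_le {x y : Fin d → ℤ} {K : ℝ} (h : weight x ≤ K * weight y) (n : ℕ) :
    (weight y ^ n)⁻¹ ≤ K ^ n * (weight x ^ n)⁻¹ := by
  have hx := weight_pos x
  have hy := weight_pos y
  rw [← div_eq_mul_inv, inv_le_iff_one_le_mul₀ (by positivity), div_mul_eq_mul_div,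
    one_le_div (by positivity), ← mul_pow]
  exact pow_le_pow_left₀ hx.le h n

lemma slowlyVarying_inv_weight_pow (n : ℕ) :
    SlowlyVarying fun z : Fin d → ℤ => (weight z ^ n)⁻¹ := by
  refine fun r => Asymptotics.isBigO_top.mpr ⟨(1 + l1Norm r) ^ n, fun z => ?_⟩
  simp only [norm_inv, norm_pow, norm_weight]
  exact inv_weight_pow_le (weight_le_weight_add z r) n

lemma exists_log_weight_le (r : Fin d → ℤ) :
    ∃ C, 0 ≤ C ∧ ∀ z, Real.log (weight z) ≤ C * Real.log (weight (z + r)) := by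
  have hlog2 : 0 < Real.log 2 := Real.log_pos one_lt_two
  have hlogr : 0 ≤ Real.log (1 + l1Norm r) := Real.log_nonneg (by simp)
  refine ⟨Real.log (1 + l1Norm r) / Real.log 2 + 1, by positivity, fun z => ?_⟩
  have hzr := weight_pos (z + r)
  have hmono : Real.log 2 ≤ Real.log (weight (z + r)) := Real.log_le_log two_pos (two_le_weight _)
  calc Real.log (weight z)
      ≤ Real.log ((1 + l1Norm r) * weight (z + r)) :=
        Real.log_le_log (weight_pos z) (weight_le_weight_add z r)
    _ = Real.log (1 + l1Norm r) / Real.log 2 * Real.log 2 + Real.log (weight (z + r)) := by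
        rw [Real.log_mul (by positivity) hzr.ne', div_mul_cancel₀ _ hlog2.ne']
    _ ≤ _ := by rw [add_mul, one_mul]; gcongr

lemma slowlyVarying_inv_weight_pow_mul_log (n : ℕ) :
    SlowlyVarying fun z : Fin d → ℤ => (weight z ^ n * Real.log (weight z))⁻¹ := by
  intro r
  simp_rw [mul_inv]
  refine (slowlyVarying_inv_weight_pow n r).mul (Asymptotics.isBigO_top.mpr ?_)
  obtain ⟨C, -, hC⟩ := exists_log_weight_le r
  refine ⟨C, fun z => ?_⟩
  rw [norm_inv, norm_inv, norm_log_weight, norm_log_weight, ← div_eq_mul_inv,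
    inv_le_iff_one_le_mul₀ (log_weight_pos _), div_mul_eq_mul_div, one_le_div (log_weight_pos z)]
  exact hC z

end Weight

/-! ### Counting lattice points in dyadic shells -/

section Counting

variable {d : ℕ}

/-- The index of the dyadic shell `2 ^ k ≤ weight z < 2 ^ (k + 1)` that contains `z`. -/
def dyadicLevel (z : Fin d → ℤ) : ℕ := Nat.log 2 (l1Norm z + 2)

lemma two_pow_dyadicLevel_le (z : Fin d → ℤ) : (2 : ℝ) ^ dyadicLevel z ≤ weight z := by
  unfold weight
  exact_mod_cast (Nat.pow_log_le_self 2 (by omega) : 2 ^ dyadicLevel z ≤ l1Norm z + 2)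

lemma l1Norm_add_two_lt (z : Fin d → ℤ) : l1Norm z + 2 < 2 ^ (dyadicLevel z + 1) :=
  Nat.lt_pow_succ_log_self one_lt_two _

lemma weight_lt_two_pow (z : Fin d → ℤ) : weight z < (2 : ℝ) ^ (dyadicLevel z + 1) := by
  unfold weight
  exact_mod_cast l1Norm_add_two_lt z

lemma dyadicLevel_pos (z : Fin d → ℤ) : 0 < dyadicLevel z :=
  Nat.log_pos one_lt_two (by omega)

lemma card_le_of_l1Norm_le {s : Finset (Fin d → ℤ)} {n : ℕ} (hs : ∀ z ∈ s, l1Norm z ≤ n) :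
    s.card ≤ (2 * n + 1) ^ d := by
  have hsub : s ⊆ Fintype.piFinset fun _ : Fin d => Finset.Icc (-(n : ℤ)) n := fun z hz => by
    simp only [Fintype.mem_piFinset, Finset.mem_Icc]
    exact fun i => by have := (natAbs_le_l1Norm z i).trans (hs z hz); omega
  refine (Finset.card_le_card hsub).trans_eq ?_
  rw [Fintype.card_piFinset, Finset.prod_const, Finset.card_univ, Fintype.card_fin, Int.card_Icc]
  congr 1
  omega

lemma card_le_of_weight_le {s : Finset (Fin d → ℤ)} {X : ℝ} (hX : 1 ≤ X)
    (hs : ∀ z ∈ s, weight z ≤ X) : (s.card : ℝ) ≤ (3 * X) ^ d := by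
  have hcard : s.card ≤ (2 * ⌊X⌋₊ + 1) ^ d := card_le_of_l1Norm_le fun z hz =>
    Nat.le_floor ((le_add_of_nonneg_right zero_le_two).trans (hs z hz))
  have hfloor : (⌊X⌋₊ : ℝ) ≤ X := Nat.floor_le (by linarith)
  calc (s.card : ℝ) ≤ (2 * ⌊X⌋₊ + 1) ^ d := by exact_mod_cast hcard
    _ ≤ (3 * X) ^ d := by gcongr; linarith

lemma card_filter_dyadicLevel_le (s : Finset (Fin d → ℤ)) (k : ℕ) :
    (s.filter fun z => dyadicLevel z = k).card ≤ (5 * 2 ^ k) ^ d := by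
  refine (card_le_of_l1Norm_le (n := 2 * 2 ^ k) fun z hz => ?_).trans
    (Nat.pow_le_pow_left (by have := Nat.one_le_two_pow (n := k); omega) d)
  have := l1Norm_add_two_lt z
  rw [(Finset.mem_filter.mp hz).2, pow_succ] at this
  omega

lemma sum_le_sum_dyadicLevel (s : Finset (Fin d → ℤ)) {F : (Fin d → ℤ) → ℝ} {a : ℕ → ℝ}
    (ha : ∀ k, 0 ≤ a k) (hF : ∀ z, F z ≤ a (dyadicLevel z) / (2 ^ dyadicLevel z) ^ d) :
    ∑ z ∈ s, F z ≤ 5 ^ d * ∑ k ∈ s.image dyadicLevel, a k := by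
  rw [← Finset.sum_fiberwise_of_maps_to (fun x hx => Finset.mem_image_of_mem dyadicLevel hx),
    Finset.mul_sum]
  refine Finset.sum_le_sum fun k _ => ?_
  have hcard : ((s.filter fun z => dyadicLevel z = k).card : ℝ) ≤ (5 * 2 ^ k) ^ d := by
    exact_mod_cast card_filter_dyadicLevel_le s k
  calc ∑ z ∈ s with dyadicLevel z = k, F z
      ≤ (s.filter fun z => dyadicLevel z = k).card • (a k / (2 ^ k) ^ d) :=
        Finset.sum_le_card_nsmul _ _ _ fun z hz => (Finset.mem_filter.mp hz).2 ▸ hF z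
    _ ≤ (5 * 2 ^ k) ^ d * (a k / (2 ^ k) ^ d) := by
        rw [nsmul_eq_mul]
        have := ha k
        gcongr
    _ = 5 ^ d * a k := by rw [mul_pow]; field_simp

lemma image_dyadicLevel_subset {s : Finset (Fin d → ℤ)} {X : ℝ} (hs : ∀ z ∈ s, weight z ≤ X) :
    s.image dyadicLevel ⊆ Finset.range (Nat.log 2 ⌊X⌋₊ + 1) := by
  refine Finset.image_subset_iff.mpr fun z hz => Finset.mem_range_succ_iff.mpr ?_
  refine Nat.log_mono_right (Nat.le_floor ?_)
  simpa [weight] using hs z hz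

lemma two_pow_log_floor_le {X : ℝ} (hX : 1 ≤ X) : (2 : ℝ) ^ Nat.log 2 ⌊X⌋₊ ≤ X := by
  have hpow : 2 ^ Nat.log 2 ⌊X⌋₊ ≤ ⌊X⌋₊ := Nat.pow_log_le_self 2 (Nat.floor_pos.mpr hX).ne'
  calc (2 : ℝ) ^ Nat.log 2 ⌊X⌋₊ ≤ ⌊X⌋₊ := by exact_mod_cast hpow
    _ ≤ X := Nat.floor_le (by linarith)

lemma sum_inv_weight_pow_pred_le (hd : 1 ≤ d) {s : Finset (Fin d → ℤ)} {X : ℝ} (hX : 2 ≤ X)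
    (hs : ∀ z ∈ s, weight z ≤ X) : ∑ z ∈ s, (weight z ^ (d - 1))⁻¹ ≤ 4 * 5 ^ d * X := by
  have hshell (z : Fin d → ℤ) :
      (weight z ^ (d - 1))⁻¹ ≤ 2 ^ (dyadicLevel z + 1) / (2 ^ dyadicLevel z) ^ d := by
    have hz := weight_pos z
    rw [inv_eq_one_div, div_le_div_iff₀ (by positivity) (by positivity), one_mul]
    calc ((2 : ℝ) ^ dyadicLevel z) ^ d
        ≤ weight z ^ d := by gcongr; exact two_pow_dyadicLevel_le z
      _ = weight z * weight z ^ (d - 1) := (mul_pow_sub_one (by omega) _).symm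
      _ ≤ _ := by gcongr; exact (weight_lt_two_pow z).le
  have hgeom : ∑ k ∈ Finset.range (Nat.log 2 ⌊X⌋₊ + 1), (2 : ℝ) ^ (k + 1) ≤ 4 * X := by
    simp_rw [pow_succ _ (_ : ℕ), ← Finset.sum_mul]
    rw [geom_sum_eq (by norm_num), pow_succ]
    linarith [two_pow_log_floor_le (by linarith : 1 ≤ X)]
  calc ∑ z ∈ s, (weight z ^ (d - 1))⁻¹
      ≤ 5 ^ d * ∑ k ∈ s.image dyadicLevel, (2 : ℝ) ^ (k + 1) :=
        sum_le_sum_dyadicLevel s (fun _ => by positivity) hshell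
    _ ≤ 5 ^ d * ∑ k ∈ Finset.range (Nat.log 2 ⌊X⌋₊ + 1), (2 : ℝ) ^ (k + 1) := by
        gcongr
        exact image_dyadicLevel_subset hs
    _ ≤ 5 ^ d * (4 * X) := by gcongr
    _ = 4 * 5 ^ d * X := by ring

lemma sum_inv_weight_pow_le {s : Finset (Fin d → ℤ)} {X : ℝ} (hX : 2 ≤ X)
    (hs : ∀ z ∈ s, weight z ≤ X) :
    ∑ z ∈ s, (weight z ^ d)⁻¹ ≤ 2 * 5 ^ d / Real.log 2 * Real.log X := by
  have hlog2 : 0 < Real.log 2 := Real.log_pos one_lt_two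
  have hshell (z : Fin d → ℤ) : (weight z ^ d)⁻¹ ≤ 1 / (2 ^ dyadicLevel z) ^ d := by
    rw [one_div]
    gcongr
    exact two_pow_dyadicLevel_le z
  have hlevels : ((Nat.log 2 ⌊X⌋₊ + 1 : ℕ) : ℝ) ≤ 2 * Real.log X / Real.log 2 := by
    have hfloor := Real.log_le_log (by positivity) (two_pow_log_floor_le (by linarith : 1 ≤ X))
    have hmono := Real.log_le_log two_pos hX
    rw [Real.log_pow] at hfloor
    rw [le_div_iff₀ hlog2]
    push_cast
    linarith
  calc ∑ z ∈ s, (weight z ^ d)⁻¹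
      ≤ 5 ^ d * ∑ _k ∈ s.image dyadicLevel, (1 : ℝ) :=
        sum_le_sum_dyadicLevel s (fun _ => zero_le_one) hshell
    _ ≤ 5 ^ d * ∑ _k ∈ Finset.range (Nat.log 2 ⌊X⌋₊ + 1), (1 : ℝ) := by
        gcongr
        exact image_dyadicLevel_subset hs
    _ ≤ 5 ^ d * (2 * Real.log X / Real.log 2) := by
        gcongr
        simpa using hlevels
    _ = _ := by ring

-- The shell of level `k` contributes at most a constant times `k ^ α`.
lemma summable_inv_weight_pow_mul_log_rpow {α : ℝ} (hα : α < -1) :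
    Summable fun z : Fin d → ℤ => (weight z ^ d)⁻¹ * Real.log (weight z) ^ α := by
  have hlog2 : 0 < Real.log 2 := Real.log_pos one_lt_two
  set a : ℕ → ℝ := fun k => Real.log 2 ^ α * (k : ℝ) ^ α
  have ha (k : ℕ) : 0 ≤ a k := by positivity
  have hsum : Summable a := (Real.summable_nat_rpow.mpr hα).mul_left _
  have hshell (z : Fin d → ℤ) : (weight z ^ d)⁻¹ * Real.log (weight z) ^ α ≤
      a (dyadicLevel z) / (2 ^ dyadicLevel z) ^ d := by
    have hlevel : (0 : ℝ) < dyadicLevel z := by exact_mod_cast dyadicLevel_pos z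
    have hle := two_pow_dyadicLevel_le z
    have hlog : Real.log (weight z) ^ α ≤ a (dyadicLevel z) := by
      simp only [a]
      rw [← Real.mul_rpow hlog2.le hlevel.le]
      refine Real.rpow_le_rpow_of_nonpos (by positivity) ?_ (by linarith)
      rw [mul_comm, ← Real.log_pow]
      exact Real.log_le_log (by positivity) hle
    rw [mul_comm, div_eq_mul_inv]
    have := ha (dyadicLevel z)
    have := weight_pos z
    gcongr
  refine summable_of_sum_le (c := 5 ^ d * ∑' k, a k) (fun z => ?_) fun s => ?_
  · have := weight_pos z
    have := log_weight_pos z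
    positivity
  · exact (sum_le_sum_dyadicLevel s ha hshell).trans
      (mul_le_mul_of_nonneg_left (hsum.sum_le_tsum _ fun k _ => ha k) (by positivity))

end Counting

/-! ### Newton interpolation at the origin -/

section Newton

variable {d : ℕ}

lemma ring_choose_succ (t : ℝ) (b : ℕ) :
    Ring.choose t (b + 1) = Ring.choose t b * ((t - b) / (b + 1)) := by
  rw [Ring.choose_eq_smul, Ring.choose_eq_smul, descPochhammer_succ_right, Polynomial.smeval_mul,
    Polynomial.smeval_sub, Polynomial.smeval_X, Polynomial.smeval_natCast, Nat.factorial_succ]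
  simp only [smul_eq_mul, pow_one, pow_zero, nsmul_one, Nat.cast_mul, Nat.cast_add, Nat.cast_one]
  field_simp

lemma abs_ring_choose_le (t : ℝ) (b : ℕ) : |Ring.choose t b| ≤ (1 + |t|) ^ b := by
  induction b with
  | zero => simp
  | succ b ih =>
    have hb : (0 : ℝ) < b + 1 := by positivity
    rw [ring_choose_succ, abs_mul, pow_succ]
    gcongr
    rw [abs_div, abs_of_pos hb, div_le_iff₀ hb]
    have hsub : |t - b| ≤ |t| + b := (abs_sub _ _).trans_eq (by rw [Nat.abs_cast])
    nlinarith [mul_nonneg (abs_nonneg t) (Nat.cast_nonneg (α := ℝ) b)]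

/-- The standard basis vector of `ℤ^d`. -/
def unitVec (i : Fin d) : Fin d → ℤ := Pi.single i 1

/-- The directions of the mixed difference of order `β`: each `unitVec i` occurs `β i` times. -/
def unitDirections (β : Fin d → ℕ) : Multiset (Fin d → ℤ) := ∑ i, β i • {unitVec i}

lemma card_unitDirections (β : Fin d → ℕ) : (unitDirections β).card = ∑ i, β i := by
  simp [unitDirections]

lemma unitDirections_zero : unitDirections (0 : Fin d → ℕ) = 0 := by simp [unitDirections]

lemma unitDirections_add_single (β : Fin d → ℕ) (i : Fin d) :
    unitDirections (β + Pi.single i 1) = unitVec i ::ₘ unitDirections β := by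
  have hsingle : ∑ j, (Pi.single i 1 : Fin d → ℕ) j • ({unitVec j} : Multiset (Fin d → ℤ)) =
      {unitVec i} := by
    rw [Fintype.sum_eq_single i fun j hj => by rw [Pi.single_eq_of_ne hj, zero_smul],
      Pi.single_eq_same, one_smul]
  simp only [unitDirections, Pi.add_apply, add_smul, Finset.sum_add_distrib, hsingle]
  rw [add_comm, Multiset.singleton_add]

/-- The multi-indices of total degree less than `p`. -/
def multiIndicesLT (d p : ℕ) : Finset (Fin d → ℕ) :=
  (Fintype.piFinset fun _ => Finset.range p).filter fun β => ∑ i, β i < p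

lemma mem_multiIndicesLT {p : ℕ} {β : Fin d → ℕ} : β ∈ multiIndicesLT d p ↔ ∑ i, β i < p := by
  simp only [multiIndicesLT, Finset.mem_filter, Fintype.mem_piFinset, Finset.mem_range,
    and_iff_right_iff_imp]
  exact fun h i => (Finset.single_le_sum (fun _ _ => Nat.zero_le _) (Finset.mem_univ i)).trans_lt h

lemma sum_add_single_one (β : Fin d → ℕ) (i : Fin d) :
    ∑ j, (β + Pi.single i 1 : Fin d → ℕ) j = ∑ j, β j + 1 := by
  simp [Finset.sum_add_distrib]

/-- The multivariate binomial coefficient `∏ i, (z i choose β i)`. -/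
def multiChoose (β : Fin d → ℕ) (z : Fin d → ℤ) : ℝ := ∏ i, Ring.choose (z i : ℝ) (β i)

lemma abs_multiChoose_le (β : Fin d → ℕ) (z : Fin d → ℤ) :
    |multiChoose β z| ≤ weight z ^ ∑ i, β i := by
  rw [multiChoose, Finset.abs_prod, ← Finset.prod_pow_eq_pow_sum]
  refine Finset.prod_le_prod (fun _ _ => abs_nonneg _) fun i _ => (abs_ring_choose_le _ _).trans ?_
  refine pow_le_pow_left₀ (by positivity) ?_ _
  unfold weight
  linarith [abs_le_l1Norm z i]

lemma fwdDiff_multiChoose_add_single (β : Fin d → ℕ) (i : Fin d) :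
    fwdDiff (unitVec i) (multiChoose (β + Pi.single i 1)) = multiChoose β := by
  funext z
  have hrest (y : Fin d → ℤ) (γ : Fin d → ℕ) (hy : ∀ j ≠ i, y j = z j) (hγ : ∀ j ≠ i, γ j = β j) :
      multiChoose γ y = Ring.choose (y i : ℝ) (γ i) *
        ∏ j ∈ Finset.univ.erase i, Ring.choose (z j : ℝ) (β j) := by
    rw [multiChoose, ← Finset.mul_prod_erase _ _ (Finset.mem_univ i)]
    refine congrArg _ (Finset.prod_congr rfl fun j hj => ?_)
    rw [hy j (Finset.ne_of_mem_erase hj), hγ j (Finset.ne_of_mem_erase hj)]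
  have hβ : ∀ j ≠ i, (β + Pi.single i 1 : Fin d → ℕ) j = β j := fun j hj => by simp [hj]
  have hz : ∀ j ≠ i, (z + unitVec i) j = z j := fun j hj => by simp [unitVec, hj]
  rw [fwdDiff, hrest (z + unitVec i) _ hz hβ, hrest z _ (fun _ _ => rfl) hβ,
    hrest z _ (fun _ _ => rfl) (fun _ _ => rfl)]
  simp only [Pi.add_apply, Pi.single_eq_same, unitVec, Int.cast_add, Int.cast_one,
    Ring.choose_succ_succ]
  ring

lemma fwdDiff_multiChoose_eq_zero {β : Fin d → ℕ} {i : Fin d} (hβ : β i = 0) :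
    fwdDiff (unitVec i) (multiChoose β) = 0 := by
  funext z
  refine sub_eq_zero.mpr (Finset.prod_congr rfl fun j _ => ?_)
  by_cases hj : j = i
  · rw [hj, hβ, Ring.choose_zero_right, Ring.choose_zero_right]
  · simp [unitVec, hj]

lemma multiChoose_zero_right {β : Fin d → ℕ} (hβ : β ≠ 0) : multiChoose β 0 = 0 := by
  obtain ⟨i, hi⟩ := Function.ne_iff.mp hβ
  obtain ⟨b, hb⟩ := Nat.exists_eq_succ_of_ne_zero hi
  refine Finset.prod_eq_zero (Finset.mem_univ i) ?_
  rw [hb, Pi.zero_apply, Int.cast_zero, Ring.choose_zero_succ]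

/-- The Newton interpolation polynomial of `h` at the origin, of degree less than `p`. -/
def newtonPoly (p : ℕ) (h : (Fin d → ℤ) → ℝ) (z : Fin d → ℤ) : ℝ :=
  ∑ β ∈ multiIndicesLT d p, multiChoose β z * iterDiff (unitDirections β) h 0

lemma newtonPoly_zero (h : (Fin d → ℤ) → ℝ) (z : Fin d → ℤ) : newtonPoly 0 h z = 0 := by
  simp [newtonPoly, multiIndicesLT]

lemma newtonPoly_succ_apply_zero (p : ℕ) (h : (Fin d → ℤ) → ℝ) : newtonPoly (p + 1) h 0 = h 0 := by
  rw [newtonPoly, Finset.sum_eq_single 0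
    (fun β _ hβ => by rw [multiChoose_zero_right hβ, zero_mul])
    (fun h0 => absurd (mem_multiIndicesLT.mpr (by simp)) h0), unitDirections_zero, iterDiff_zero]
  simp [multiChoose]

lemma fwdDiff_newtonPoly_succ (p : ℕ) (h : (Fin d → ℤ) → ℝ) (i : Fin d) :
    fwdDiff (unitVec i) (newtonPoly (p + 1) h) = newtonPoly p (fwdDiff (unitVec i) h) := by
  funext z
  have hdiff : fwdDiff (unitVec i) (newtonPoly (p + 1) h) z =
      ∑ β ∈ multiIndicesLT d (p + 1),
        fwdDiff (unitVec i) (multiChoose β) z * iterDiff (unitDirections β) h 0 := by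
    simp only [fwdDiff, newtonPoly, ← Finset.sum_sub_distrib, sub_mul]
  rw [hdiff]
  symm
  refine Finset.sum_of_injOn (· + Pi.single i 1) (add_left_injective _).injOn (fun β hβ => ?_)
    (fun β hβ hrange => ?_) (fun β _ => ?_)
  · rw [Finset.mem_coe, mem_multiIndicesLT] at hβ ⊢
    rw [sum_add_single_one]
    omega
  · suffices hβi : β i = 0 by rw [fwdDiff_multiChoose_eq_zero hβi, Pi.zero_apply, zero_mul]
    by_contra hβi
    have hle : Pi.single i 1 ≤ β := update_le_iff.mpr
      ⟨Nat.one_le_iff_ne_zero.mpr hβi, fun _ _ => Nat.zero_le _⟩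
    rw [← tsub_add_cancel_of_le hle, mem_multiIndicesLT, sum_add_single_one] at hβ
    exact hrange ⟨β - Pi.single i 1, Finset.mem_coe.mpr (mem_multiIndicesLT.mpr (by omega)),
      tsub_add_cancel_of_le hle⟩
  · rw [fwdDiff_multiChoose_add_single, unitDirections_add_single,
      iterDiff_cons_eq_iterDiff_fwdDiff]

lemma l1Norm_add_single (z : Fin d → ℤ) (i : Fin d) (a : ℤ) :
    l1Norm (z + Pi.single i a) + (z i).natAbs = l1Norm z + (z i + a).natAbs := by
  have hrest : ∑ j ∈ Finset.univ.erase i, ((z + Pi.single i a : Fin d → ℤ) j).natAbs =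
      ∑ j ∈ Finset.univ.erase i, (z j).natAbs :=
    Finset.sum_congr rfl fun j hj => by simp [Finset.ne_of_mem_erase hj]
  rw [l1Norm, l1Norm, ← Finset.add_sum_erase _ _ (Finset.mem_univ i), hrest,
    ← Finset.add_sum_erase _ (fun j => (z j).natAbs) (Finset.mem_univ i)]
  simp only [Pi.add_apply, Pi.single_eq_same]
  ring

lemma exists_l1Norm_sub_or_add_unitVec {z : Fin d → ℤ} {n : ℕ} (hz : l1Norm z = n + 1) :
    ∃ i, l1Norm (z - unitVec i) = n ∨ l1Norm (z + unitVec i) = n := by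
  obtain ⟨i, hi⟩ : ∃ i, z i ≠ 0 := by
    refine Function.ne_iff.mp fun h => ?_
    rw [l1Norm_eq_zero.mpr h] at hz
    omega
  refine ⟨i, ?_⟩
  have hadd := l1Norm_add_single z i 1
  have hsub := l1Norm_add_single z i (-1)
  rw [Pi.single_neg, ← sub_eq_add_neg] at hsub
  unfold unitVec
  omega

lemma abs_le_add_mul_l1Norm {E : (Fin d → ℤ) → ℝ} {n k : ℕ} {M B : ℝ} (hB : 0 ≤ B)
    (hM : ∀ z, l1Norm z ≤ k → |E z| ≤ M)
    (hE : ∀ i y, l1Norm y ≤ n → k ≤ l1Norm y → |fwdDiff (unitVec i) E y| ≤ B) {z : Fin d → ℤ}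
    (hz : l1Norm z ≤ n) : |E z| ≤ M + B * l1Norm z := by
  induction hm : l1Norm z generalizing z with
  | zero => simpa using hM z (by omega)
  | succ m ih =>
    rcases le_or_gt (m + 1) k with hk | hk
    · exact (hM z (by omega)).trans (le_add_of_nonneg_right (by positivity))
    push_cast
    obtain ⟨i, hi | hi⟩ := exists_l1Norm_sub_or_add_unitVec hm
    · have hstep := hE i (z - unitVec i) (by omega) (by omega)
      have hprev := ih (by omega) hi
      have hEz : E z = E (z - unitVec i) + fwdDiff (unitVec i) E (z - unitVec i) := by
        simp [fwdDiff]
      rw [hEz]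
      linarith [abs_add_le (E (z - unitVec i)) (fwdDiff (unitVec i) E (z - unitVec i))]
    · have hstep := hE i z (by omega) (by omega)
      have hprev := ih (by omega) hi
      have hEz : E z = E (z + unitVec i) - fwdDiff (unitVec i) E z := by simp [fwdDiff]
      rw [hEz]
      linarith [abs_sub (E (z + unitVec i)) (fwdDiff (unitVec i) E z)]

theorem abs_sub_newtonPoly_le {n p : ℕ} {B : ℝ} (hB : 0 ≤ B) {h : (Fin d → ℤ) → ℝ}
    (hh : ∀ t : Multiset (Fin d), t.card = p →
      ∀ y, l1Norm y ≤ n → |iterDiff (t.map unitVec) h y| ≤ B) {z : Fin d → ℤ}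
    (hz : l1Norm z ≤ n) : |h z - newtonPoly p h z| ≤ B * n ^ p := by
  induction p generalizing h z with
  | zero => simpa [newtonPoly_zero] using hh 0 rfl z hz
  | succ p ih =>
    have hdiff (i) (y) (hy : l1Norm y ≤ n) :
        |fwdDiff (unitVec i) (h - newtonPoly (p + 1) h) y| ≤ B * n ^ p := by
      have hcomm : fwdDiff (unitVec i) (h - newtonPoly (p + 1) h) y =
          fwdDiff (unitVec i) h y - newtonPoly p (fwdDiff (unitVec i) h) y := by
        rw [← fwdDiff_newtonPoly_succ]
        simp only [fwdDiff, Pi.sub_apply]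
        ring
      rw [hcomm]
      refine ih (fun t ht => ?_) hy
      rw [← iterDiff_cons_eq_iterDiff_fwdDiff, ← Multiset.map_cons]
      exact hh _ (by rw [Multiset.card_cons, ht])
    have horigin (y : Fin d → ℤ) (hy : l1Norm y ≤ 0) : |(h - newtonPoly (p + 1) h) y| ≤ 0 := by
      rw [l1Norm_eq_zero.mp (Nat.le_zero.mp hy), Pi.sub_apply, newtonPoly_succ_apply_zero,
        sub_self, abs_zero]
    calc |h z - newtonPoly (p + 1) h z|
        ≤ 0 + B * n ^ p * l1Norm z :=
          abs_le_add_mul_l1Norm (by positivity) horigin (fun i y hy _ => hdiff i y hy) hz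
      _ ≤ 0 + B * n ^ p * n := by gcongr
      _ = B * n ^ (p + 1) := by ring

end Newton

/-! ### Convolution with a kernel whose differences decay -/

section Convolution

variable {d : ℕ}

/-- A cutoff in `k` around the origin at scale `weight l`: it is `1` for `l1Norm k ≤ weight l / 8`
and vanishes for `weight l / 4 ≤ l1Norm k`. -/
def cutoff (l k : Fin d → ℤ) : ℝ := max 0 (min 1 (2 - 8 * l1Norm k / weight l))

lemma cutoff_nonneg (l k : Fin d → ℤ) : 0 ≤ cutoff l k := le_max_left _ _

lemma cutoff_le_one (l k : Fin d → ℤ) : cutoff l k ≤ 1 := max_le zero_le_one (min_le_left _ _)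

lemma norm_cutoff_le_one (l k : Fin d → ℤ) : ‖cutoff l k‖ ≤ 1 := by
  rw [Real.norm_of_nonneg (cutoff_nonneg l k)]
  exact cutoff_le_one l k

lemma cutoff_eq_zero {l k : Fin d → ℤ} (h : weight l / 4 ≤ l1Norm k) : cutoff l k = 0 := by
  refine max_eq_left ((min_le_right _ _).trans ?_)
  rw [sub_nonpos, le_div_iff₀ (weight_pos l)]
  linarith

lemma cutoff_eq_one {l k : Fin d → ℤ} (h : (l1Norm k : ℝ) ≤ weight l / 8) : cutoff l k = 1 := by
  have hle : 8 * (l1Norm k : ℝ) / weight l ≤ 1 := (div_le_one (weight_pos l)).mpr (by linarith)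
  rw [cutoff, min_eq_left (by linarith), max_eq_right zero_le_one]

lemma abs_l1Norm_sub_sub_le (k r : Fin d → ℤ) : |(l1Norm k : ℝ) - l1Norm (k - r)| ≤ l1Norm r := by
  have hle : (l1Norm k : ℝ) - l1Norm (k - (k - r)) ≤ l1Norm (k - (k - (k - r))) :=
    l1Norm_sub_ge k (k - (k - r))
  have hge := l1Norm_sub_ge (k - r) (-r)
  rw [sub_sub_cancel] at hle
  rw [l1Norm_neg, sub_neg_eq_add, sub_add_cancel] at hge
  exact abs_le.mpr ⟨by linarith, by linarith⟩

lemma abs_cutoff_sub_sub_le (l k r : Fin d → ℤ) :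
    |cutoff l (k - r) - cutoff l k| ≤ 8 * l1Norm r / weight l := by
  have hl := weight_pos l
  calc |cutoff l (k - r) - cutoff l k|
      ≤ |(2 - 8 * (l1Norm (k - r) : ℝ) / weight l) - (2 - 8 * l1Norm k / weight l)| := by
        unfold cutoff
        rw [max_comm (0 : ℝ), max_comm (0 : ℝ), min_comm (1 : ℝ), min_comm (1 : ℝ)]
        refine (abs_max_sub_max_le_abs _ _ _).trans ((abs_min_sub_min_le_max _ _ _ _).trans_eq ?_)
        rw [sub_self, abs_zero, max_eq_left (abs_nonneg _)]
    _ = 8 * |(l1Norm k : ℝ) - l1Norm (k - r)| / weight l := by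
        rw [show (2 - 8 * (l1Norm (k - r) : ℝ) / weight l) - (2 - 8 * l1Norm k / weight l) =
          8 * ((l1Norm k : ℝ) - l1Norm (k - r)) / weight l by ring, abs_div, abs_mul,
          abs_of_pos hl, abs_of_pos (by norm_num : (0 : ℝ) < 8)]
    _ ≤ _ := by gcongr; exact abs_l1Norm_sub_sub_le k r

lemma cutoff_eq_zero_of_lt_weight {l k : Fin d → ℤ} (h : 2 * weight l < weight k) :
    cutoff l k = 0 := by
  have := two_le_weight l
  refine cutoff_eq_zero ?_
  unfold weight at *
  linarith

lemma weight_le_two_mul_of_cutoff_ne_zero {l k : Fin d → ℤ} (h : cutoff l k ≠ 0) :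
    weight l ≤ 2 * weight (l - k) := by
  have hk : (l1Norm k : ℝ) < weight l / 4 := not_le.mp fun hk => h (cutoff_eq_zero hk)
  have := l1Norm_sub_ge l k
  unfold weight at *
  linarith

/-- Every iterated difference of `g` gains one power of decay over the base rate `weight ^ (-q)`. -/
def HasDecayingDifferences (q : ℕ) (g : (Fin d → ℤ) → ℝ) : Prop :=
  ∀ s : Multiset (Fin d → ℤ), iterDiff s g =O[⊤] fun x => (weight x ^ (q + s.card))⁻¹

lemma HasDecayingDifferences.isBigO {q : ℕ} {g : (Fin d → ℤ) → ℝ}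
    (hg : HasDecayingDifferences q g) : g =O[⊤] fun x => (weight x ^ q)⁻¹ := by
  simpa using hg 0

lemma isBigO_inv_weight_pow_one (q : ℕ) :
    (fun x : Fin d → ℤ => (weight x ^ q)⁻¹) =O[⊤] fun _ => (1 : ℝ) := by
  refine Asymptotics.isBigO_top.mpr ⟨1, fun x => ?_⟩
  simp only [norm_inv, norm_pow, norm_weight, norm_one, mul_one]
  exact inv_le_one_of_one_le₀ (one_le_pow₀ (by linarith [two_le_weight x]))

lemma exists_forall_norm_le_of_forall_isBigO {ι α : Type*} [Finite ι] {F : ι → α → ℝ} {B : α → ℝ}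
    (h : ∀ i, F i =O[⊤] B) : ∃ C, 0 ≤ C ∧ ∀ i x, ‖F i x‖ ≤ C * ‖B x‖ := by
  cases nonempty_fintype ι
  choose C hC using fun i => Asymptotics.isBigO_top.mp (h i)
  refine ⟨∑ i, |C i|, Finset.sum_nonneg fun _ _ => abs_nonneg _, fun i x => (hC i x).trans ?_⟩
  gcongr
  exact (le_abs_self _).trans
    (Finset.single_le_sum (f := fun i => |C i|) (fun _ _ => abs_nonneg _) (Finset.mem_univ i))

lemma isBigO_inv_weight_pow_mul_weight_pow (q : ℕ) {b p : ℕ} (hb : b ≤ p) :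
    (fun x : (Fin d → ℤ) × (Fin d → ℤ) => (weight x.1 ^ (q + b))⁻¹ * weight x.2 ^ b)
      =O[𝓟 {x | weight x.1 ≤ 2 * weight x.2}]
        fun x => (weight x.1 ^ (q + p))⁻¹ * weight x.2 ^ p := by
  refine Asymptotics.isBigO_principal.mpr ⟨2 ^ (p - b), fun ⟨l, m⟩ hlm => ?_⟩
  simp only [norm_mul, norm_inv, norm_pow, norm_weight]
  have hl := weight_pos l
  have hm := weight_pos m
  have hpow : weight l ^ (p - b) ≤ 2 ^ (p - b) * weight m ^ (p - b) := by
    rw [← mul_pow]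
    exact pow_le_pow_left₀ hl.le hlm _
  obtain ⟨e, rfl⟩ := Nat.exists_eq_add_of_le hb
  rw [Nat.add_sub_cancel_left] at hpow ⊢
  rw [← add_assoc, pow_add _ (q + b), pow_add _ b]
  calc (weight l ^ (q + b))⁻¹ * weight m ^ b
      = (weight l ^ (q + b) * weight l ^ e)⁻¹ * weight m ^ b * weight l ^ e := by field_simp
    _ ≤ (weight l ^ (q + b) * weight l ^ e)⁻¹ * weight m ^ b * (2 ^ e * weight m ^ e) := by gcongr
    _ = _ := by ring

lemma isBigO_one_sub_cutoff_mul {q : ℕ} {g : (Fin d → ℤ) → ℝ}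
    (hg : g =O[⊤] fun x => (weight x ^ q)⁻¹) :
    (fun x : (Fin d → ℤ) × (Fin d → ℤ) => (1 - cutoff x.1 x.2) * g x.2)
      =O[⊤] fun x => (weight x.1 ^ q)⁻¹ := by
  obtain ⟨C, hC⟩ := Asymptotics.isBigO_top.mp hg
  refine Asymptotics.isBigO_top.mpr ⟨|C| * 8 ^ q, fun ⟨l, k⟩ => ?_⟩
  have hl := weight_pos l
  simp only [norm_mul, norm_inv, norm_pow, norm_weight] at hC ⊢
  rcases le_or_gt (l1Norm k : ℝ) (weight l / 8) with hk | hk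
  · rw [cutoff_eq_one hk, sub_self, norm_zero, zero_mul]
    positivity
  have hlk : weight l ≤ 8 * weight k := by unfold weight at *; linarith
  have hcut : ‖1 - cutoff l k‖ ≤ 1 := by
    rw [Real.norm_of_nonneg (by linarith [cutoff_le_one l k])]
    linarith [cutoff_nonneg l k]
  calc ‖1 - cutoff l k‖ * ‖g k‖ ≤ 1 * (|C| * (8 ^ q * (weight l ^ q)⁻¹)) := by
        refine mul_le_mul hcut ((hC k).trans ?_) (norm_nonneg _) zero_le_one
        have := weight_pos k
        exact mul_le_mul (le_abs_self C) (inv_weight_pow_le hlk q) (by positivity) (abs_nonneg C)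
    _ = |C| * 8 ^ q * (weight l ^ q)⁻¹ := by ring

lemma isBigO_newtonPoly {q p : ℕ} {g : (Fin d → ℤ) → ℝ} (hg : HasDecayingDifferences q g) :
    (fun x : (Fin d → ℤ) × (Fin d → ℤ) => newtonPoly p (fun m => g (x.1 - m)) x.2)
      =O[𝓟 {x | weight x.1 ≤ 2 * weight x.2}]
        fun x => (weight x.1 ^ (q + p))⁻¹ * weight x.2 ^ p := by
  refine Asymptotics.IsBigO.fun_sum fun β hβ => ?_
  have hchoose : (fun x : (Fin d → ℤ) × (Fin d → ℤ) => multiChoose β x.2)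
      =O[⊤] fun x => weight x.2 ^ ∑ i, β i :=
    Asymptotics.isBigO_top.mpr ⟨1, fun x => by
      rw [norm_pow, norm_weight, one_mul]
      exact abs_multiChoose_le β x.2⟩
  have hdiff : (fun x : (Fin d → ℤ) × (Fin d → ℤ) =>
      iterDiff (unitDirections β) (fun m => g (x.1 - m)) 0)
      =O[⊤] fun x => (weight x.1 ^ (q + ∑ i, β i))⁻¹ := by
    simp only [iterDiff_comp_const_sub, sub_zero]
    have h := (hg ((unitDirections β).map (-·))).comp_tendsto
      (tendsto_top : Tendsto Prod.fst (⊤ : Filter ((Fin d → ℤ) × (Fin d → ℤ))) ⊤)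
    simpa only [Multiset.card_map, card_unitDirections, Function.comp_def] using h
  refine ((hdiff.mul hchoose).mono le_top).trans
    (isBigO_inv_weight_pow_mul_weight_pow q (mem_multiIndicesLT.mp hβ).le) |>.congr_left
    fun x => mul_comm _ _

lemma isBigO_sub_newtonPoly {q p : ℕ} {g : (Fin d → ℤ) → ℝ} (hg : HasDecayingDifferences q g) :
    (fun x : (Fin d → ℤ) × (Fin d → ℤ) => g (x.1 - x.2) - newtonPoly p (fun m => g (x.1 - m)) x.2)
      =O[𝓟 {x | 2 * weight x.2 < weight x.1}]
        fun x => (weight x.1 ^ (q + p))⁻¹ * weight x.2 ^ p := by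
  obtain ⟨C, hC0, hC⟩ := exists_forall_norm_le_of_forall_isBigO
    (F := fun t : Sym (Fin d) p => iterDiff ((t.1.map unitVec).map (-·)) g)
    (B := fun x => (weight x ^ (q + p))⁻¹)
    fun t => by simpa [t.2] using hg ((t.1.map unitVec).map (-·))
  refine Asymptotics.isBigO_principal.mpr ⟨C * 2 ^ (q + p), fun ⟨l, m⟩ hlm => ?_⟩
  have hl := weight_pos l
  simp only [norm_mul, norm_inv, norm_pow, norm_weight] at hC ⊢
  have hball (t : Multiset (Fin d)) (ht : t.card = p) (y : Fin d → ℤ) (hy : l1Norm y ≤ l1Norm m) :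
      |iterDiff (t.map unitVec) (fun m => g (l - m)) y| ≤
        C * (2 ^ (q + p) * (weight l ^ (q + p))⁻¹) := by
    have hy : (l1Norm y : ℝ) ≤ l1Norm m := by exact_mod_cast hy
    have hly : weight l ≤ 2 * weight (l - y) := by
      have := l1Norm_sub_ge l y
      simp only [Set.mem_ofPred_eq, weight] at hlm ⊢
      linarith
    rw [iterDiff_comp_const_sub]
    exact (hC ⟨t, ht⟩ _).trans (mul_le_mul_of_nonneg_left (inv_weight_pow_le hly _) hC0)
  calc |g (l - m) - newtonPoly p (fun m => g (l - m)) m|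
      ≤ C * (2 ^ (q + p) * (weight l ^ (q + p))⁻¹) * (l1Norm m : ℝ) ^ p :=
        abs_sub_newtonPoly_le (by positivity) hball le_rfl
    _ ≤ C * (2 ^ (q + p) * (weight l ^ (q + p))⁻¹) * weight m ^ p := by
        gcongr
        exact le_add_of_nonneg_right zero_le_two
    _ = _ := by ring

lemma isBigO_sub_newtonPoly_sub_cutoff_mul {q p : ℕ} {g : (Fin d → ℤ) → ℝ}
    (hg : HasDecayingDifferences q g) :
    (fun x : (Fin d → ℤ) × (Fin d → ℤ) => g (x.1 - x.2) -
        newtonPoly p (fun m => g (x.1 - m)) x.2 - cutoff x.1 (x.1 - x.2) * g (x.1 - x.2))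
      =O[⊤] fun x => (weight x.1 ^ (q + p))⁻¹ * weight x.2 ^ p := by
  have hcover : (⊤ : Filter ((Fin d → ℤ) × (Fin d → ℤ))) =
      𝓟 {x | weight x.1 ≤ 2 * weight x.2} ⊔ 𝓟 {x | 2 * weight x.2 < weight x.1} := by
    rw [sup_principal, ← principal_univ]
    refine congrArg 𝓟 (Set.eq_univ_of_forall fun x => ?_).symm
    exact le_or_gt (weight x.1) (2 * weight x.2)
  rw [hcover]
  refine Asymptotics.IsBigO.sup ?_ ?_
  · have hcut := (isBigO_one_sub_cutoff_mul hg.isBigO).comp_tendsto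
      (tendsto_top : Tendsto (fun x : (Fin d → ℤ) × (Fin d → ℤ) => (x.1, x.1 - x.2)) ⊤ ⊤)
    have hzero := isBigO_inv_weight_pow_mul_weight_pow (d := d) q (Nat.zero_le p)
    simp only [add_zero, pow_zero, mul_one] at hzero
    exact (((hcut.mono le_top).trans hzero).sub (isBigO_newtonPoly hg)).congr_left
      fun x => by simp only [Function.comp_apply]; ring
  · refine (isBigO_sub_newtonPoly hg).congr' ?_ .rfl
    refine eventually_principal.mpr fun ⟨l, m⟩ hlm => ?_
    have hcut : cutoff l (l - m) = 0 := by
      refine cutoff_eq_zero ?_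
      have := l1Norm_sub_ge l m
      simp only [Set.mem_ofPred_eq, weight] at hlm ⊢
      linarith
    simp only [hcut, zero_mul, sub_zero]

lemma summable_of_summable_weight_pow_mul_abs {p : ℕ} {f : (Fin d → ℤ) → ℝ}
    (hf : Summable fun m => weight m ^ p * |f m|) : Summable f := by
  refine hf.of_norm_bounded fun m => ?_
  have := two_le_weight m
  exact le_mul_of_one_le_left (abs_nonneg _) (one_le_pow₀ (by linarith))

lemma hasSum_newtonPoly_mul {p : ℕ} (h : (Fin d → ℤ) → ℝ) {f : (Fin d → ℤ) → ℝ}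
    (hf : ∀ β : Fin d → ℕ, ∑ i, β i < p → HasSum (fun m => f m * multiChoose β m) 0) :
    HasSum (fun m => newtonPoly p h m * f m) 0 := by
  have hterm := hasSum_sum (s := multiIndicesLT d p) fun β hβ =>
    (hf β (mem_multiIndicesLT.mp hβ)).mul_right (iterDiff (unitDirections β) h 0)
  simp only [zero_mul, Finset.sum_const_zero] at hterm
  refine hterm.congr_fun fun m => ?_
  rw [newtonPoly, Finset.sum_mul]
  exact Finset.sum_congr rfl fun β _ => by ring

lemma isBigO_tsum_sub_tsum_cutoff {q p : ℕ} {g f : (Fin d → ℤ) → ℝ}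
    (hg : HasDecayingDifferences q g) (hf : Summable fun m => weight m ^ p * |f m|)
    (hmoment : ∀ β : Fin d → ℕ, ∑ i, β i < p → HasSum (fun m => f m * multiChoose β m) 0) :
    (fun l => ∑' m, g (l - m) * f m - ∑' m, cutoff l (l - m) * g (l - m) * f m)
      =O[⊤] fun l => (weight l ^ (q + p))⁻¹ := by
  obtain ⟨C, hC⟩ := Asymptotics.isBigO_top.mp (isBigO_sub_newtonPoly_sub_cutoff_mul (p := p) hg)
  obtain ⟨C₀, hC₀⟩ := Asymptotics.isBigO_top.mp (hg.isBigO.trans (isBigO_inv_weight_pow_one q))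
  simp only [norm_one, mul_one] at hC₀
  have hfabs := (summable_of_summable_weight_pow_mul_abs hf).norm.mul_left C₀
  refine Asymptotics.isBigO_top.mpr ⟨C * ∑' m, weight m ^ p * |f m|, fun l => ?_⟩
  have hfull : Summable fun m => g (l - m) * f m := by
    refine hfabs.of_norm_bounded fun m => ?_
    rw [norm_mul]
    gcongr
    exact hC₀ _
  have hnear : Summable fun m => cutoff l (l - m) * g (l - m) * f m := by
    refine hfabs.of_norm_bounded fun m => ?_
    rw [norm_mul, norm_mul]
    gcongr
    exact (mul_le_of_le_one_left (norm_nonneg _) (norm_cutoff_le_one _ _)).trans (hC₀ _)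
  have hfar := (hfull.hasSum.sub (hasSum_newtonPoly_mul (fun m => g (l - m)) hmoment)).sub
    hnear.hasSum
  rw [sub_zero] at hfar
  rw [← hfar.tsum_eq]
  refine (tsum_of_norm_bounded (hf.hasSum.mul_left (C * ‖(weight l ^ (q + p))⁻¹‖))
    fun m => ?_).trans_eq (by ring)
  have hlm := hC (l, m)
  rw [norm_mul, norm_pow, norm_weight, ← mul_assoc] at hlm
  rw [← sub_mul, ← sub_mul, norm_mul, ← mul_assoc]
  exact mul_le_mul_of_nonneg_right hlm (norm_nonneg _)

end Convolution

/-! ### The part of the convolution near the singularity of the kernel -/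

section NearSingularity

variable {d : ℕ}

lemma summable_of_forall_weight_eq_zero {X : ℝ} {F : (Fin d → ℤ) → ℝ}
    (hF : ∀ k, X < weight k → F k = 0) : Summable F :=
  summable_of_hasFiniteSupport ((finite_weight_le X).subset fun k hk =>
    not_lt.mp fun hlt => hk (hF k hlt))

lemma norm_tsum_le_of_forall_weight_eq_zero {X B : ℝ} {F H : (Fin d → ℤ) → ℝ}
    (hF : ∀ k, X < weight k → F k = 0) (hFH : ∀ k, weight k ≤ X → ‖F k‖ ≤ H k)
    (hB : ∀ s : Finset (Fin d → ℤ), (∀ k ∈ s, weight k ≤ X) → ∑ k ∈ s, H k ≤ B) :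
    ‖∑' k, F k‖ ≤ B := by
  have hmem (k : Fin d → ℤ) : k ∈ (finite_weight_le X).toFinset ↔ weight k ≤ X := by simp
  rw [tsum_eq_sum fun k hk => hF k (not_le.mp fun hle => hk ((hmem k).mpr hle))]
  exact (norm_sum_le _ _).trans <| (Finset.sum_le_sum fun k hk => hFH k ((hmem k).mp hk)).trans <|
    hB _ fun k => (hmem k).mp

lemma isBigO_tsum_cutoff_mul {w b S g f : (Fin d → ℤ) → ℝ}
    (hS : ∀ l (s : Finset (Fin d → ℤ)), (∀ k ∈ s, weight k ≤ 2 * weight l) → ∑ k ∈ s, ‖w k‖ ≤ S l)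
    (hb : ∃ K, ∀ x y, weight x ≤ 2 * weight y → ‖b y‖ ≤ K * ‖b x‖)
    (hg : g =O[⊤] w) (hf : f =O[⊤] b) :
    (fun l => ∑' k, cutoff l k * g k * f (l - k)) =O[⊤] fun l => S l * b l := by
  obtain ⟨K, hK⟩ := hb
  obtain ⟨Cg, hCg0, hCg⟩ := hg.exists_nonneg
  obtain ⟨Cf, hCf0, hCf⟩ := hf.exists_nonneg
  rw [Asymptotics.isBigOWith_top] at hCg hCf
  refine Asymptotics.isBigO_top.mpr ⟨Cg * (Cf * K), fun l => ?_⟩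
  have hKb : 0 ≤ K * ‖b l‖ := (norm_nonneg _).trans (hK l l (by linarith [weight_pos l]))
  have hS0 : 0 ≤ S l := by simpa using hS l ∅ (by simp)
  refine norm_tsum_le_of_forall_weight_eq_zero (X := 2 * weight l)
    (H := fun k => ‖w k‖ * (Cg * (Cf * (K * ‖b l‖))))
    (fun k hk => ?_) (fun k _ => ?_) fun s hs => ?_
  · rw [cutoff_eq_zero_of_lt_weight hk, zero_mul, zero_mul]
  · rcases eq_or_ne (cutoff l k) 0 with hcut | hcut
    · rw [hcut, zero_mul, zero_mul, norm_zero]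
      positivity
    have hfb : ‖f (l - k)‖ ≤ Cf * (K * ‖b l‖) := (hCf _).trans <| by
      gcongr
      exact hK _ _ (weight_le_two_mul_of_cutoff_ne_zero hcut)
    calc ‖cutoff l k * g k * f (l - k)‖
        ≤ 1 * (Cg * ‖w k‖) * (Cf * (K * ‖b l‖)) := by
          rw [norm_mul, norm_mul]
          gcongr
          · exact norm_cutoff_le_one l k
          · exact hCg k
      _ = _ := by ring
  · rw [← Finset.sum_mul]
    calc (∑ k ∈ s, ‖w k‖) * (Cg * (Cf * (K * ‖b l‖)))
        ≤ S l * (Cg * (Cf * (K * ‖b l‖))) := by gcongr; exact hS l s hs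
      _ = _ := by rw [norm_mul, Real.norm_of_nonneg hS0]; ring

lemma isBigO_tsum_cutoff_mul_pred (hd : 1 ≤ d) {p : ℕ} {g f : (Fin d → ℤ) → ℝ}
    (hg : g =O[⊤] fun x => (weight x ^ (d - 1))⁻¹) (hf : f =O[⊤] fun x => (weight x ^ (d + p))⁻¹) :
    (fun l => ∑' k, cutoff l k * g k * f (l - k)) =O[⊤] fun l => (weight l ^ (d - 1 + p))⁻¹ := by
  have h := isBigO_tsum_cutoff_mul (S := fun l => 4 * 5 ^ d * (2 * weight l)) (fun l s hs => ?_)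
    ⟨2 ^ (d + p), fun x y hxy => ?_⟩ hg hf
  · refine h.trans (Asymptotics.isBigO_top.mpr ⟨4 * 5 ^ d * 2, fun l => le_of_eq ?_⟩)
    have hl := weight_pos l
    rw [show d + p = d - 1 + p + 1 by omega, pow_succ, Real.norm_of_nonneg (by positivity),
      Real.norm_of_nonneg (by positivity)]
    field_simp
  · simp only [norm_inv, norm_pow, norm_weight]
    exact sum_inv_weight_pow_pred_le hd (by linarith [two_le_weight l]) hs
  · simp only [norm_inv, norm_pow, norm_weight]
    exact inv_weight_pow_le hxy _

lemma log_two_mul_weight_le (x : Fin d → ℤ) :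
    Real.log (2 * weight x) ≤ 2 * Real.log (weight x) := by
  have hx := two_le_weight x
  rw [two_mul (Real.log _), Real.log_mul two_ne_zero (weight_pos x).ne']
  gcongr

lemma log_weight_le_two_mul {x y : Fin d → ℤ} (h : weight x ≤ 2 * weight y) :
    Real.log (weight x) ≤ 2 * Real.log (weight y) :=
  (Real.log_le_log (weight_pos x) h).trans (log_two_mul_weight_le y)

lemma isBigO_tsum_cutoff_mul_log {p : ℕ} {g f : (Fin d → ℤ) → ℝ}
    (hg : g =O[⊤] fun x => (weight x ^ d)⁻¹)
    (hf : f =O[⊤] fun x => (weight x ^ (d + p) * Real.log (weight x))⁻¹) :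
    (fun l => ∑' k, cutoff l k * g k * f (l - k)) =O[⊤] fun l => (weight l ^ (d + p))⁻¹ := by
  have : 0 < Real.log 2 := Real.log_pos one_lt_two
  have h := isBigO_tsum_cutoff_mul
    (S := fun l => 2 * 5 ^ d / Real.log 2 * (2 * Real.log (weight l))) (fun l s hs => ?_)
    ⟨2 ^ (d + p) * 2, fun x y hxy => ?_⟩ hg hf
  · refine h.trans (Asymptotics.isBigO_top.mpr ⟨2 * 5 ^ d / Real.log 2 * 2, fun l => le_of_eq ?_⟩)
    have hl := log_weight_pos l
    have hl' := weight_pos l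
    rw [Real.norm_of_nonneg (by positivity), Real.norm_of_nonneg (by positivity)]
    field_simp
  · simp only [norm_inv, norm_pow, norm_weight]
    refine (sum_inv_weight_pow_le (by linarith [two_le_weight l]) hs).trans ?_
    gcongr
    exact log_two_mul_weight_le l
  · have hx := log_weight_pos x
    have hy := log_weight_pos y
    have hx' := weight_pos x
    simp only [mul_inv, norm_mul, norm_inv, norm_pow, norm_weight, norm_log_weight]
    rw [mul_mul_mul_comm]
    gcongr
    · exact inv_weight_pow_le hxy _
    · rw [← div_eq_mul_inv, inv_le_iff_one_le_mul₀ hy, div_mul_eq_mul_div, one_le_div hx]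
      exact log_weight_le_two_mul hxy

lemma isBigO_inv_weight_pow_mul_log (n : ℕ) :
    (fun x : Fin d → ℤ => (weight x ^ n * Real.log (weight x))⁻¹)
      =O[⊤] fun x => (weight x ^ n)⁻¹ := by
  have : 0 < Real.log 2 := Real.log_pos one_lt_two
  refine Asymptotics.isBigO_top.mpr ⟨(Real.log 2)⁻¹, fun x => ?_⟩
  have hx := weight_pos x
  simp only [mul_inv, norm_mul, norm_inv, norm_pow, norm_weight, norm_log_weight]
  rw [mul_comm]
  gcongr
  exact two_le_weight x

lemma weight_le_of_cutoff_sub_ne {l k r : Fin d → ℤ} (h : cutoff l (k - r) ≠ cutoff l k) :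
    weight k ≤ 2 * (1 + l1Norm r) * weight l ∧ weight l ≤ 8 * (1 + l1Norm r) * weight k ∧
      weight l ≤ 2 * (1 + l1Norm r) * weight (l - (k - r)) := by
  have hr : (0 : ℝ) ≤ l1Norm r := Nat.cast_nonneg _
  obtain ⟨hkr, hrk⟩ := abs_le.mp (abs_l1Norm_sub_sub_le k r)
  have houter : (l1Norm (k - r) : ℝ) < weight l / 4 + l1Norm r := by
    by_contra! hc
    exact h (by rw [cutoff_eq_zero (by linarith), cutoff_eq_zero (by linarith)])
  have hinner : weight l / 8 < l1Norm k + l1Norm r := by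
    by_contra! hc
    have := (l1Norm k).cast_nonneg (α := ℝ)
    exact h (by rw [cutoff_eq_one (by linarith), cutoff_eq_one (by linarith)])
  have hsub := l1Norm_sub_ge l (k - r)
  have hrk' := mul_nonneg hr (l1Norm k).cast_nonneg
  have hrl := mul_nonneg hr (l1Norm l).cast_nonneg
  have hrsub := mul_nonneg hr (l1Norm (l - (k - r))).cast_nonneg
  unfold weight at *
  refine ⟨?_, ?_, ?_⟩ <;> nlinarith

lemma isBigO_tsum_cutoff_sub_mul {p n : ℕ} {g f : (Fin d → ℤ) → ℝ} (r : Fin d → ℤ)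
    (hg : g =O[⊤] fun x => (weight x ^ (d + n))⁻¹) (hf : f =O[⊤] fun x => (weight x ^ (d + p))⁻¹) :
    (fun l => ∑' k, (cutoff l (k - r) - cutoff l k) * g k * f (l - (k - r)))
      =O[⊤] fun l => (weight l ^ (d + p + (n + 1)))⁻¹ := by
  obtain ⟨Cg, hCg0, hCg⟩ := hg.exists_nonneg
  obtain ⟨Cf, hCf0, hCf⟩ := hf.exists_nonneg
  rw [Asymptotics.isBigOWith_top] at hCg hCf
  simp only [norm_inv, norm_pow, norm_weight] at hCg hCf
  set ρ : ℝ := 1 + l1Norm r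
  have hρ1 : 1 ≤ ρ := le_add_of_nonneg_right (Nat.cast_nonneg _)
  refine Asymptotics.isBigO_top.mpr ⟨(3 * (2 * ρ)) ^ d *
    (8 * ρ * (Cg * (8 * ρ) ^ (d + n)) * (Cf * (2 * ρ) ^ (d + p))), fun l => ?_⟩
  have hl := weight_pos l
  have hl2 := two_le_weight l
  have hρl : 1 ≤ 2 * ρ * weight l := by nlinarith
  set c : ℝ := 8 * ρ / weight l * (Cg * ((8 * ρ) ^ (d + n) * (weight l ^ (d + n))⁻¹)) *
    (Cf * ((2 * ρ) ^ (d + p) * (weight l ^ (d + p))⁻¹)) with hc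
  have hc0 : 0 ≤ c := by positivity
  refine norm_tsum_le_of_forall_weight_eq_zero (X := 2 * ρ * weight l) (H := fun _ => c)
    (fun k hk => ?_) (fun k _ => ?_) fun s hs => ?_
  · have hcut : cutoff l (k - r) = cutoff l k := by
      by_contra hne
      exact hk.not_ge (weight_le_of_cutoff_sub_ne hne).1
    rw [hcut, sub_self, zero_mul, zero_mul]
  · rcases eq_or_ne (cutoff l (k - r)) (cutoff l k) with hcut | hcut
    · rwa [hcut, sub_self, zero_mul, zero_mul, norm_zero]
    obtain ⟨-, hlk, hlkr⟩ := weight_le_of_cutoff_sub_ne hcut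
    rw [norm_mul, norm_mul, hc]
    gcongr
    · refine (abs_cutoff_sub_sub_le l k r).trans ?_
      gcongr
      linarith
    · exact (hCg k).trans (mul_le_mul_of_nonneg_left (inv_weight_pow_le hlk _) hCg0)
    · exact (hCf _).trans (mul_le_mul_of_nonneg_left (inv_weight_pow_le hlkr _) hCf0)
  · rw [Finset.sum_const, nsmul_eq_mul]
    calc (s.card : ℝ) * c ≤ (3 * (2 * ρ * weight l)) ^ d * c := by
          gcongr
          exact card_le_of_weight_le hρl hs
      _ = _ := by
          rw [hc, norm_inv, norm_pow, norm_weight, ← mul_assoc 3, mul_pow (3 * (2 * ρ)),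
            show d + p + (n + 1) = (d + n) + p + 1 by omega, pow_succ, pow_add _ (d + n) p,
            pow_add (weight l) d p]
          field_simp

lemma tsum_mul_fwdDiff_eq {η : (Fin d → ℤ) → ℝ} {X : ℝ} (hη : ∀ k, X < weight k → η k = 0)
    (r l : Fin d → ℤ) (g f : (Fin d → ℤ) → ℝ) :
    ∑' k, η k * fwdDiff r g k * f (l - k) =
      ∑' k, η k * g k * fwdDiff r f (l - k) + ∑' k, (η (k - r) - η k) * g k * f (l - (k - r)) := by
  have hshifted : Summable fun k => η k * f (l - k) * g (k + r) :=
    summable_of_forall_weight_eq_zero fun k hk => by rw [hη k hk, zero_mul, zero_mul]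
  have hunshifted : Summable fun k => η k * f (l - k) * g k :=
    summable_of_forall_weight_eq_zero fun k hk => by rw [hη k hk, zero_mul, zero_mul]
  have hdiff : Summable fun k => η k * g k * fwdDiff r f (l - k) :=
    summable_of_forall_weight_eq_zero fun k hk => by rw [hη k hk, zero_mul, zero_mul]
  have htranslate : HasSum (fun k => η (k - r) * f (l - (k - r)) * g k)
      (∑' k, η k * f (l - k) * g (k + r)) := by
    have h := (Equiv.subRight r).hasSum_iff.mpr hshifted.hasSum
    simpa only [Function.comp_def, Equiv.subRight_apply, sub_add_cancel] using h
  have hleft : ∑' k, η k * fwdDiff r g k * f (l - k) =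
      ∑' k, η k * f (l - k) * g (k + r) - ∑' k, η k * f (l - k) * g k :=
    ((hshifted.hasSum.sub hunshifted.hasSum).congr_fun fun k => by
      simp only [fwdDiff]; ring).tsum_eq
  have hboundary : ∑' k, (η (k - r) - η k) * g k * f (l - (k - r)) =
      ∑' k, η k * f (l - k) * g (k + r) - ∑' k, η k * f (l - k) * g k -
        ∑' k, η k * g k * fwdDiff r f (l - k) :=
    (((htranslate.sub hunshifted.hasSum).sub hdiff.hasSum).congr_fun fun k => by
      simp only [fwdDiff, show l - (k - r) = l - k + r by abel]; ring).tsum_eq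
  rw [hleft, hboundary, add_sub_cancel]

theorem isBigO_tsum_cutoff_mul_iterDiff {n p : ℕ} {g f : (Fin d → ℤ) → ℝ}
    (hg : HasDecayingDifferences d g)
    (hf : ∀ s : Multiset (Fin d → ℤ), s.card ≤ n →
      iterDiff s f =O[⊤] fun x => (weight x ^ (d + p + s.card) * Real.log (weight x))⁻¹)
    {s : Multiset (Fin d → ℤ)} (hs : s.card = n) :
    (fun l => ∑' k, cutoff l k * iterDiff s g k * f (l - k))
      =O[⊤] fun l => (weight l ^ (d + p + n))⁻¹ := by
  have hf₀ : f =O[⊤] fun x => (weight x ^ (d + p) * Real.log (weight x))⁻¹ := by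
    simpa using hf 0 (by simp)
  induction n generalizing p f s with
  | zero =>
    rw [Multiset.card_eq_zero] at hs
    subst hs
    simpa using isBigO_tsum_cutoff_mul_log hg.isBigO hf₀
  | succ n ih =>
    obtain ⟨r, hr⟩ := Multiset.card_pos_iff_exists_mem.mp (by omega : 0 < s.card)
    obtain ⟨s, rfl⟩ := Multiset.exists_cons_of_mem hr
    have hsn : s.card = n := by simpa using hs
    have hfr (t : Multiset (Fin d → ℤ)) (ht : t.card ≤ n) : iterDiff t (fwdDiff r f)
        =O[⊤] fun x => (weight x ^ (d + (p + 1) + t.card) * Real.log (weight x))⁻¹ := by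
      have h := hf (r ::ₘ t) (by simpa using ht)
      rwa [iterDiff_cons_eq_iterDiff_fwdDiff, Multiset.card_cons,
        show d + p + (t.card + 1) = d + (p + 1) + t.card by omega] at h
    have hmain := ih hfr hsn (by simpa using hfr 0 (by simp))
    have hboundary := isBigO_tsum_cutoff_sub_mul (n := n) r (hsn ▸ hg s)
      (hf₀.trans (isBigO_inv_weight_pow_mul_log _))
    rw [show d + (p + 1) + n = d + p + (n + 1) by omega] at hmain
    refine (hmain.add hboundary).congr_left fun l => ?_
    rw [iterDiff_cons]
    exact (tsum_mul_fwdDiff_eq (fun k => cutoff_eq_zero_of_lt_weight) r l _ f).symm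

end NearSingularity

/-! ### Discrete Green identity -/

section Stencil

variable {V ι : Type*} [AddCommGroup V] [Fintype ι]

/-- The finite-difference operator with offsets `s` and coefficients `c`. -/
def stencilOp (s : ι → V) (c : ι → ℝ) (f : V → ℝ) (z : V) : ℝ := ∑ t, c t * f (z + s t)

/-- The commutator of the multiplication by `φ` with a finite-difference operator. -/
def stencilCommutator (s : ι → V) (c : ι → ℝ) (φ g : V → ℝ) (z : V) : ℝ :=
  φ z * stencilOp s c g z - stencilOp s c (fun x => φ x * g x) z

lemma stencilCommutator_eq (s : ι → V) (c : ι → ℝ) (φ g : V → ℝ) (z : V) :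
    stencilCommutator s c φ g z = -(g z * ∑ t, c t * fwdDiff (s t) φ z) -
      ∑ t, c t * (fwdDiff (s t) φ z * fwdDiff (s t) g z) := by
  simp only [stencilCommutator, stencilOp, fwdDiff, Finset.mul_sum, ← Finset.sum_neg_distrib,
    ← Finset.sum_sub_distrib]
  exact Finset.sum_congr rfl fun t _ => by ring

lemma tsum_mul_stencilOp_neg (s : ι → V) (c : ι → ℝ) (f : V → ℝ) {φ : V → ℝ}
    (hφ : φ.HasFiniteSupport) :
    ∑' z, f z * stencilOp (-s) c φ z = ∑' z, φ z * stencilOp s c f z := by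
  have hsummable (t : ι) : Summable fun z => φ z * f (z + s t) :=
    summable_of_hasFiniteSupport (hφ.subset fun z hz hφz => hz (by simp [hφz]))
  have hshift (t : ι) (z : V) :
      φ (z + -s t) * f (z + -s t + s t) = f z * φ (z + -s t) := by
    rw [neg_add_cancel_right, mul_comm]
  have hterm (t : ι) : HasSum (fun z => f z * φ (z + -s t)) (∑' z, φ z * f (z + s t)) :=
    ((Equiv.addRight (-s t)).hasSum_iff.mpr (hsummable t).hasSum).congr_fun
      fun z => (hshift t z).symm
  have hleft := hasSum_sum (s := Finset.univ) fun t _ => (hterm t).mul_left (c t)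
  have hright := hasSum_sum (s := Finset.univ) fun t _ => (hsummable t).hasSum.mul_left (c t)
  refine (hleft.congr_fun fun z => ?_).tsum_eq.trans (hright.congr_fun fun z => ?_).tsum_eq.symm
  all_goals
    simp only [stencilOp, Finset.mul_sum, Pi.neg_apply]
    exact Finset.sum_congr rfl fun t _ => by ring

lemma hasFiniteSupport_comp_add_right {φ : V → ℝ} (hφ : φ.HasFiniteSupport) (r : V) :
    (fun z => φ (z + r)).HasFiniteSupport :=
  Set.Finite.preimage (add_left_injective r).injOn hφ

lemma tsum_mul_stencilCommutator {s : ι → V} {c c' : ι → ℝ}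
    (hcc' : ∀ θ, stencilOp (-s) c' θ = stencilOp s c θ) {φ : V → ℝ} (hφ : φ.HasFiniteSupport)
    (f g : V → ℝ) :
    ∑' z, f z * stencilCommutator s c φ g z =
      ∑' z, φ z * (f z * stencilOp s c g z) - ∑' z, φ z * (g z * stencilOp s c' f z) := by
  have hφg : (fun x => φ x * g x).HasFiniteSupport :=
    hφ.subset fun z hz hφz => hz (by simp [hφz])
  have hdual : ∑' z, f z * stencilOp s c (fun x => φ x * g x) z =
      ∑' z, φ z * (g z * stencilOp s c' f z) := by
    rw [← hcc', tsum_mul_stencilOp_neg s c' f hφg]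
    simp only [mul_assoc]
  rw [← hdual, ← Summable.tsum_sub]
  · refine tsum_congr fun z => ?_
    rw [stencilCommutator]
    ring
  · exact summable_of_hasFiniteSupport (hφ.subset fun z hz hφz => hz (by simp [hφz]))
  · simp only [stencilOp, Finset.mul_sum]
    refine summable_sum fun t _ => summable_of_hasFiniteSupport <|
      (hasFiniteSupport_comp_add_right hφ (s t)).subset fun z hz hφz => hz ?_
    simp only [hφz, zero_mul, mul_zero]

variable {ν : Type*} [Fintype ν]

/-- The system of finite-difference operators with offsets `s` and coefficient matrices `c`. -/
def stencilSystem (s : ι → V) (c : ν → ν → ι → ℝ) (u : ν → V → ℝ) (a : ν) (z : V) : ℝ :=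
  ∑ b, stencilOp s (c a b) (u b) z

lemma sum_tsum_mul_stencilCommutator {s : ι → V} {c : ν → ν → ι → ℝ}
    (hc : ∀ a b θ, stencilOp (-s) (c b a) θ = stencilOp s (c a b) θ) {φ : V → ℝ}
    (hφ : φ.HasFiniteSupport) (u v : ν → V → ℝ) :
    ∑ a, ∑ b, ∑' z, u a z * stencilCommutator s (c a b) φ (v b) z =
      ∑ a, ∑' z, φ z * (u a z * stencilSystem s c v a z) -
        ∑ b, ∑' z, φ z * (v b z * stencilSystem s c u b z) := by
  have hpull (u v : ν → V → ℝ) (a : ν) :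
      ∑' z, φ z * (u a z * stencilSystem s c v a z) =
        ∑ b, ∑' z, φ z * (u a z * stencilOp s (c a b) (v b) z) := by
    simp only [stencilSystem, Finset.mul_sum]
    exact Summable.tsum_finsetSum fun b _ =>
      summable_of_hasFiniteSupport (hφ.subset fun z hz hφz => hz (by simp [hφz]))
  simp only [fun a b => tsum_mul_stencilCommutator (hc a b) hφ, Finset.sum_sub_distrib, hpull]
  rw [Finset.sum_comm (f := fun a b => ∑' z, φ z * (v b z * stencilOp s (c b a) (u a) z))]

end Stencil

section SmoothCutoff

variable {d : ℕ}

/-- The squared Euclidean norm on `ℤ^d`. -/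
def sqNorm (z : Fin d → ℤ) : ℝ := ∑ i, (z i : ℝ) ^ 2

/-- The positive part of `1 - |z|² / R²`. -/
def paraboloidCap (R : ℝ) (z : Fin d → ℤ) : ℝ := max 0 (1 - sqNorm z / R ^ 2)

/-- A compactly supported cutoff at scale `R`. Squaring the cap makes it `C^{1,1}`, so that its
second differences are `O(R⁻²)`; this is what a commutator with an elliptic operator needs. -/
def smoothCutoff (R : ℝ) (z : Fin d → ℤ) : ℝ := paraboloidCap R z ^ 2

/-- The pairs `(R, z)` with `1 ≤ R` and `z` in the ball of radius `L * R`: bounds on this set are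
uniform in the scale `R`. -/
def scaledBall (L : ℝ) : Set (ℝ × (Fin d → ℤ)) := {x | 1 ≤ x.1 ∧ weight x.2 ≤ L * x.1}

lemma sqNorm_nonneg (z : Fin d → ℤ) : 0 ≤ sqNorm z := Finset.sum_nonneg fun _ _ => sq_nonneg _

lemma fwdDiff_sqNorm (s z : Fin d → ℤ) :
    fwdDiff s sqNorm z = 2 * ∑ i, (z i : ℝ) * s i + sqNorm s := by
  simp only [fwdDiff, sqNorm, Finset.mul_sum, ← Finset.sum_sub_distrib, ← Finset.sum_add_distrib]
  refine Finset.sum_congr rfl fun i _ => ?_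
  push_cast [Pi.add_apply]
  ring

lemma isBigO_fwdDiff_sqNorm (s : Fin d → ℤ) : fwdDiff s sqNorm =O[⊤] weight := by
  have hone : (fun _ => 1 : (Fin d → ℤ) → ℝ) =O[⊤] weight := by
    refine Asymptotics.isBigO_top.mpr ⟨1, fun z => ?_⟩
    rw [norm_one, norm_weight]
    linarith [two_le_weight z]
  have hcoord (i : Fin d) : (fun z : Fin d → ℤ => (z i : ℝ)) =O[⊤] weight := by
    refine Asymptotics.isBigO_top.mpr ⟨1, fun z => ?_⟩
    rw [norm_weight, one_mul]
    exact (abs_le_l1Norm z i).trans (le_add_of_nonneg_right zero_le_two)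
  have hconst : (fun _ => sqNorm s : (Fin d → ℤ) → ℝ) =O[⊤] weight := by
    simpa only [mul_one] using hone.const_mul_left (sqNorm s)
  refine (((Asymptotics.IsBigO.fun_sum (s := Finset.univ) fun i _ =>
    (hcoord i).const_mul_left (s i : ℝ)).const_mul_left 2).add hconst).congr_left fun z => ?_
  rw [fwdDiff_sqNorm]
  simp only [mul_comm]

lemma abs_sq_max_zero_sub_sub_le (y y' : ℝ) :
    |max 0 y' ^ 2 - max 0 y ^ 2 - 2 * max 0 y * (y' - y)| ≤ (y' - y) ^ 2 := by
  rw [abs_le]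
  rcases le_total 0 y with h | h <;> rcases le_total 0 y' with h' | h' <;>
    simp only [max_eq_left, max_eq_right, h, h'] <;> constructor <;>
    nlinarith [mul_nonneg (sub_nonneg.mpr h) (sub_nonneg.mpr h'), sq_nonneg y, sq_nonneg y']

lemma paraboloidCap_nonneg (R : ℝ) (z : Fin d → ℤ) : 0 ≤ paraboloidCap R z := le_max_left _ _

lemma paraboloidCap_le_one (R : ℝ) (z : Fin d → ℤ) : paraboloidCap R z ≤ 1 :=
  max_le zero_le_one (sub_le_self _ (div_nonneg (sqNorm_nonneg z) (sq_nonneg _)))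

lemma norm_paraboloidCap_le_one (R : ℝ) (z : Fin d → ℤ) : ‖paraboloidCap R z‖ ≤ 1 := by
  rw [Real.norm_of_nonneg (paraboloidCap_nonneg R z)]
  exact paraboloidCap_le_one R z

lemma norm_smoothCutoff_le_one (R : ℝ) (z : Fin d → ℤ) : ‖smoothCutoff R z‖ ≤ 1 := by
  rw [smoothCutoff, norm_pow]
  exact pow_le_one₀ (norm_nonneg _) (norm_paraboloidCap_le_one R z)

lemma smoothCutoff_eq_zero {R : ℝ} (hR : 1 ≤ R) {z : Fin d → ℤ} (h : (d + 2) * R < weight z) :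
    smoothCutoff R z = 0 := by
  suffices hcap : 1 - sqNorm z / R ^ 2 ≤ 0 by
    rw [smoothCutoff, paraboloidCap, max_eq_left hcap, zero_pow two_ne_zero]
  by_contra! hpos
  have hsq : sqNorm z < R ^ 2 := by
    rwa [sub_pos, div_lt_one (by positivity)] at hpos
  have hcoord (i : Fin d) : |(z i : ℝ)| ≤ R := by
    refine abs_le_of_sq_le_sq (le_trans ?_ hsq.le) (by linarith)
    exact Finset.single_le_sum (f := fun i => (z i : ℝ) ^ 2) (fun _ _ => sq_nonneg _)
      (Finset.mem_univ i)
  have hnorm : (l1Norm z : ℝ) ≤ d * R := by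
    rw [cast_l1Norm]
    exact (Finset.sum_le_sum fun i _ => hcoord i).trans_eq (by simp)
  unfold weight at h
  linarith

lemma hasFiniteSupport_smoothCutoff {R : ℝ} (hR : 1 ≤ R) :
    (smoothCutoff R : (Fin d → ℤ) → ℝ).HasFiniteSupport :=
  (finite_weight_le ((d + 2) * R)).subset fun _ hz =>
    not_lt.mp fun hlt => hz (smoothCutoff_eq_zero hR hlt)

lemma tendsto_smoothCutoff (z : Fin d → ℤ) :
    Tendsto (fun R => smoothCutoff R z) atTop (𝓝 1) := by
  have hcap : Tendsto (fun R : ℝ => 1 - sqNorm z / R ^ 2) atTop (𝓝 (1 - 0)) :=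
    tendsto_const_nhds.sub (tendsto_const_nhds.div_atTop (tendsto_pow_atTop two_ne_zero))
  simpa [smoothCutoff, paraboloidCap] using ((tendsto_const_nhds (x := (0 : ℝ))).max hcap).pow 2

lemma tendsto_tsum_smoothCutoff_mul {F : (Fin d → ℤ) → ℝ} (hF : Summable F) :
    Tendsto (fun R => ∑' z, smoothCutoff R z * F z) atTop (𝓝 (∑' z, F z)) := by
  refine tendsto_tsum_of_dominated_convergence hF.norm (fun z => ?_)
    (Eventually.of_forall fun R z => ?_)
  · simpa using (tendsto_smoothCutoff z).mul_const (F z)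
  · rw [norm_mul]
    exact mul_le_of_le_one_left (norm_nonneg _) (norm_smoothCutoff_le_one R z)

lemma isBigO_fwdDiff_sqNorm_div (s : Fin d → ℤ) (l : Filter (ℝ × (Fin d → ℤ))) :
    (fun x : ℝ × (Fin d → ℤ) => fwdDiff s sqNorm x.2 / x.1 ^ 2)
      =O[l] fun x => weight x.2 / x.1 ^ 2 := by
  simp only [div_eq_mul_inv]
  exact ((isBigO_fwdDiff_sqNorm s).comp_tendsto tendsto_top).mul (Asymptotics.isBigO_refl _ _)

lemma isBigO_weight_div_sq {L : ℝ} :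
    (fun x : ℝ × (Fin d → ℤ) => (weight x.2 / x.1 ^ 2) ^ 2)
      =O[𝓟 (scaledBall L)] fun x => (x.1 ^ 2)⁻¹ := by
  refine Asymptotics.isBigO_principal.mpr ⟨L ^ 2, fun ⟨R, z⟩ ⟨hR, hz⟩ => ?_⟩
  have hz₀ := weight_pos z
  simp only at hR hz
  rw [Real.norm_of_nonneg (by positivity), Real.norm_of_nonneg (by positivity), div_pow,
    div_le_iff₀ (by positivity)]
  calc weight z ^ 2 ≤ (L * R) ^ 2 := by gcongr
    _ = L ^ 2 * (R ^ 2)⁻¹ * (R ^ 2) ^ 2 := by field_simp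

lemma isBigO_fwdDiff_smoothCutoff_add (s : Fin d → ℤ) (L : ℝ) :
    (fun x : ℝ × (Fin d → ℤ) => fwdDiff s (smoothCutoff x.1) x.2 +
        2 * paraboloidCap x.1 x.2 * (fwdDiff s sqNorm x.2 / x.1 ^ 2))
      =O[𝓟 (scaledBall L)] fun x => (x.1 ^ 2)⁻¹ := by
  refine Asymptotics.IsBigO.trans (Asymptotics.IsBigO.of_bound 1 (.of_forall fun ⟨R, z⟩ => ?_))
    (((isBigO_fwdDiff_sqNorm_div s _).pow 2).trans isBigO_weight_div_sq)
  have h := abs_sq_max_zero_sub_sub_le (1 - sqNorm z / R ^ 2) (1 - sqNorm (z + s) / R ^ 2)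
  rw [one_mul, norm_pow, Real.norm_eq_abs, Real.norm_eq_abs, sq_abs]
  convert h using 1
  · simp only [fwdDiff, smoothCutoff, paraboloidCap]
    congr 1
    ring
  · simp only [fwdDiff]
    ring

lemma isBigO_fwdDiff_smoothCutoff (s : Fin d → ℤ) (L : ℝ) :
    (fun x : ℝ × (Fin d → ℤ) => fwdDiff s (smoothCutoff x.1) x.2)
      =O[𝓟 (scaledBall L)] fun x => weight x.2 / x.1 ^ 2 := by
  have hcap : (fun x : ℝ × (Fin d → ℤ) => 2 * paraboloidCap x.1 x.2) =O[𝓟 (scaledBall L)]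
      fun _ => (1 : ℝ) :=
    Asymptotics.IsBigO.const_mul_left (.of_bound 1 (.of_forall fun x => by
      simpa using norm_paraboloidCap_le_one x.1 x.2)) 2
  have hlinear := hcap.mul (isBigO_fwdDiff_sqNorm_div s (𝓟 (scaledBall L)))
  have hquadratic : (fun x : ℝ × (Fin d → ℤ) => (x.1 ^ 2)⁻¹) =O[𝓟 (scaledBall L)]
      fun x => weight x.2 / x.1 ^ 2 := by
    refine .of_bound 1 (.of_forall fun ⟨R, z⟩ => ?_)
    rw [one_mul, norm_div, norm_weight, norm_inv, ← one_div]
    gcongr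
    linarith [two_le_weight z]
  simp only [one_mul] at hlinear
  exact (((isBigO_fwdDiff_smoothCutoff_add s L).trans hquadratic).sub hlinear).congr_left
    fun x => add_sub_cancel_right _ _

variable {ι : Type*} [Fintype ι]

lemma isBigO_sum_mul_fwdDiff_smoothCutoff {s : ι → Fin d → ℤ} {c : ι → ℝ}
    (hc : ∀ i, ∑ t, c t * (s t i : ℝ) = 0) (L : ℝ) :
    (fun x : ℝ × (Fin d → ℤ) => ∑ t, c t * fwdDiff (s t) (smoothCutoff x.1) x.2)
      =O[𝓟 (scaledBall L)] fun x => (x.1 ^ 2)⁻¹ := by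
  have hfirst (z : Fin d → ℤ) :
      ∑ t, c t * fwdDiff (s t) sqNorm z = ∑ t, c t * sqNorm (s t) := by
    have hdot : ∑ t, c t * ∑ i, (z i : ℝ) * s t i = 0 := by
      simp only [Finset.mul_sum, mul_left_comm (c _)]
      rw [Finset.sum_comm]
      simp only [← Finset.mul_sum, hc, mul_zero, Finset.sum_const_zero]
    simp only [fwdDiff_sqNorm, mul_add, Finset.sum_add_distrib, mul_left_comm _ (2 : ℝ),
      ← Finset.mul_sum, hdot, mul_zero, zero_add]
  have hcap : (fun x : ℝ × (Fin d → ℤ) =>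
      2 * paraboloidCap x.1 x.2 * ((∑ t, c t * sqNorm (s t)) * (x.1 ^ 2)⁻¹))
      =O[𝓟 (scaledBall L)] fun x => 1 * (x.1 ^ 2)⁻¹ := by
    refine Asymptotics.IsBigO.mul (.const_mul_left (.of_bound 1 (.of_forall fun x => ?_)) 2)
      ((Asymptotics.isBigO_refl _ _).const_mul_left _)
    simpa using norm_paraboloidCap_le_one x.1 x.2
  simp only [one_mul] at hcap
  refine ((Asymptotics.IsBigO.fun_sum (s := Finset.univ) fun t _ =>
    (isBigO_fwdDiff_smoothCutoff_add (s t) L).const_mul_left (c t)).sub hcap).congr_left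
    fun x => ?_
  simp only [← hfirst x.2, mul_add, Finset.sum_add_distrib, Finset.mul_sum, Finset.sum_mul,
    add_sub_assoc, ← Finset.sum_sub_distrib]
  rw [add_eq_left]
  exact Finset.sum_eq_zero fun t _ => by ring

lemma isBigO_stencilCommutator_smoothCutoff (hd : 1 ≤ d) {s : ι → Fin d → ℤ} {c : ι → ℝ}
    (hc : ∀ i, ∑ t, c t * (s t i : ℝ) = 0) {g : (Fin d → ℤ) → ℝ}
    (hg : HasDecayingDifferences (d - 1) g) (L : ℝ) :
    (fun x : ℝ × (Fin d → ℤ) => stencilCommutator s c (smoothCutoff x.1) g x.2)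
      =O[𝓟 (scaledBall L)] fun x => (x.1 ^ 2)⁻¹ * (weight x.2 ^ (d - 1))⁻¹ := by
  have hg₀ : (fun x : ℝ × (Fin d → ℤ) => g x.2) =O[𝓟 (scaledBall L)]
      fun x => (weight x.2 ^ (d - 1))⁻¹ := hg.isBigO.comp_tendsto tendsto_top
  have hg₁ (t : ι) : (fun x : ℝ × (Fin d → ℤ) => fwdDiff (s t) g x.2) =O[𝓟 (scaledBall L)]
      fun x => (weight x.2 ^ d)⁻¹ := by
    have := hg {s t}
    rw [← Multiset.cons_zero, iterDiff_cons, iterDiff_zero, Multiset.card_cons,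
      Multiset.card_zero, zero_add, Nat.sub_add_cancel hd] at this
    exact this.comp_tendsto tendsto_top
  have hweight (x : ℝ × (Fin d → ℤ)) : weight x.2 / x.1 ^ 2 * (weight x.2 ^ d)⁻¹ =
      (x.1 ^ 2)⁻¹ * (weight x.2 ^ (d - 1))⁻¹ := by
    have := weight_pos x.2
    obtain ⟨e, rfl⟩ := Nat.exists_eq_add_of_le' hd
    rw [Nat.add_sub_cancel]
    field_simp
    rw [← pow_succ']
  have hzeroth := (hg₀.mul (isBigO_sum_mul_fwdDiff_smoothCutoff hc L)).neg_left.congr_right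
    fun x => mul_comm _ _
  have hfirst := Asymptotics.IsBigO.fun_sum (s := Finset.univ) fun t _ =>
    (((isBigO_fwdDiff_smoothCutoff (s t) L).mul (hg₁ t)).congr_right hweight).const_mul_left (c t)
  exact (hzeroth.sub hfirst).congr_left fun x => (stencilCommutator_eq _ _ _ _ _).symm

lemma exists_stencilCommutator_smoothCutoff_eq_zero (s : ι → Fin d → ℤ) (c : ι → ℝ) :
    ∃ L : ℝ, 1 ≤ L ∧ ∀ R, 1 ≤ R → ∀ g z, L * R < weight z →
      stencilCommutator s c (smoothCutoff R) g z = 0 := by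
  have hsum : (0 : ℝ) ≤ ∑ t, (l1Norm (s t) : ℝ) := by positivity
  have : (0 : ℝ) ≤ d := d.cast_nonneg
  refine ⟨(1 + ∑ t, (l1Norm (s t) : ℝ)) * (d + 2), by nlinarith, fun R hR g z hz => ?_⟩
  have : 0 < R := by linarith
  have hzero : smoothCutoff R z = 0 := by
    refine smoothCutoff_eq_zero hR (lt_of_le_of_lt ?_ hz)
    gcongr
    nlinarith
  have hzero_add (t : ι) : smoothCutoff R (z + s t) = 0 := by
    refine smoothCutoff_eq_zero hR (lt_of_mul_lt_mul_left ?_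
      (by positivity : (0 : ℝ) ≤ 1 + l1Norm (s t)))
    have ht : (l1Norm (s t) : ℝ) ≤ ∑ t, (l1Norm (s t) : ℝ) :=
      Finset.single_le_sum (f := fun t => (l1Norm (s t) : ℝ)) (fun _ _ => Nat.cast_nonneg _)
        (Finset.mem_univ t)
    calc (1 + l1Norm (s t) : ℝ) * ((d + 2) * R)
        ≤ (1 + ∑ t, (l1Norm (s t) : ℝ)) * (d + 2) * R := by rw [← mul_assoc]; gcongr
      _ < weight z := hz
      _ ≤ _ := weight_le_weight_add z (s t)
  simp [stencilCommutator, stencilOp, hzero, hzero_add]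

end SmoothCutoff

section SublinearGrowth

variable {d : ℕ}

lemma exists_norm_le_add_mul_weight {U : (Fin d → ℤ) → ℝ} (hU : U =o[cofinite] weight) {ε : ℝ}
    (hε : 0 < ε) : ∃ B, 0 ≤ B ∧ ∀ z, ‖U z‖ ≤ B + ε * weight z := by
  have hfin : {z | ¬‖U z‖ ≤ ε * ‖weight z‖}.Finite := hU.bound hε
  refine ⟨∑ z ∈ hfin.toFinset, ‖U z‖, Finset.sum_nonneg fun _ _ => norm_nonneg _, fun z => ?_⟩
  have := weight_pos z
  by_cases hz : ‖U z‖ ≤ ε * ‖weight z‖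
  · rw [norm_weight] at hz
    exact hz.trans (le_add_of_nonneg_left (Finset.sum_nonneg fun _ _ => norm_nonneg _))
  · exact (Finset.single_le_sum (f := fun z => ‖U z‖) (fun _ _ => norm_nonneg _)
      (hfin.mem_toFinset.mpr hz)).trans (le_add_of_nonneg_right (by positivity))

lemma tendsto_l1Norm_cofinite : Tendsto (l1Norm : (Fin d → ℤ) → ℕ) cofinite atTop :=
  tendsto_atTop.mpr fun n => (finite_l1Norm_le n).subset fun z hz =>
    (le_total n (l1Norm z)).resolve_left hz

lemma isLittleO_one_weight : (fun _ => 1 : (Fin d → ℤ) → ℝ) =o[cofinite] weight := by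
  refine Asymptotics.isLittleO_const_left.mpr (.inr ?_)
  rw [show norm ∘ weight = fun z : Fin d → ℤ => (l1Norm z : ℝ) + 2 from funext norm_weight]
  exact tendsto_atTop_add_const_right _ _
    (tendsto_natCast_atTop_atTop.comp tendsto_l1Norm_cofinite)

lemma isLittleO_weight_of_tendsto_fwdDiff {E : (Fin d → ℤ) → ℝ}
    (hE : ∀ i, Tendsto (fwdDiff (unitVec i) E) cofinite (𝓝 0)) : E =o[cofinite] weight := by
  refine Asymptotics.isLittleO_iff.mpr fun ε hε => ?_
  have hfin : (⋃ i, {z | ¬|fwdDiff (unitVec i) E z| ≤ ε / 2}).Finite :=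
    Set.finite_iUnion fun i =>
      (hE i).abs.eventually_le_const (by simpa using half_pos hε)
  obtain ⟨k, hk⟩ := (hfin.image l1Norm).bddAbove
  obtain ⟨M, hM⟩ := ((finite_l1Norm_le (d := d) (k + 1)).image fun z => |E z|).bddAbove
  have hbound (z : Fin d → ℤ) : |E z| ≤ M + ε / 2 * l1Norm z := by
    refine abs_le_add_mul_l1Norm (half_pos hε).le (fun y hy => hM ⟨y, hy, rfl⟩)
      (fun i y _ hy => ?_) le_rfl
    by_contra hlarge
    have := hk ⟨y, Set.mem_iUnion.mpr ⟨i, hlarge⟩, rfl⟩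
    omega
  filter_upwards [(isLittleO_one_weight.const_mul_left M).def (half_pos hε)] with z hz
  rw [mul_one, norm_weight] at hz
  have hMz := (le_abs_self M).trans hz
  have hbz := hbound z
  rw [Real.norm_eq_abs, norm_weight]
  unfold weight at *
  nlinarith

end SublinearGrowth

section GreenRepresentation

variable {d : ℕ} {ι ν : Type*} [Fintype ι] [Fintype ν]

lemma exists_norm_tsum_mul_stencilCommutator_le (hd : 1 ≤ d) {s : ι → Fin d → ℤ} {c : ι → ℝ}
    (hc : ∀ i, ∑ t, c t * (s t i : ℝ) = 0) {g : (Fin d → ℤ) → ℝ}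
    (hg : HasDecayingDifferences (d - 1) g) :
    ∃ T, ∀ U : (Fin d → ℤ) → ℝ, ∀ B ε, 0 ≤ B → 0 ≤ ε → (∀ z, ‖U z‖ ≤ B + ε * weight z) →
      ∀ R, 1 ≤ R → ‖∑' z, U z * stencilCommutator s c (smoothCutoff R) g z‖ ≤
        T * B / R + T * ε := by
  obtain ⟨L, hL, hzero⟩ := exists_stencilCommutator_smoothCutoff_eq_zero s c
  obtain ⟨K, hK, hbound⟩ := (isBigO_stencilCommutator_smoothCutoff hd hc hg L).exists_nonneg
  replace hbound := Asymptotics.isBigOWith_principal.mp hbound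
  refine ⟨8 * 5 ^ d * L ^ 2 * K, fun U B ε hB hε hU R hR => ?_⟩
  refine norm_tsum_le_of_forall_weight_eq_zero (X := L * R)
    (H := fun z => (weight z ^ (d - 1))⁻¹ * ((B + ε * (L * R)) * (K * (R ^ 2)⁻¹)))
    (fun z hz => by rw [hzero R hR _ z hz, mul_zero]) (fun z hz => ?_) fun S hS => ?_
  · have hcomm := hbound (R, z) ⟨hR, hz⟩
    rw [norm_mul, norm_inv, norm_inv, norm_pow (weight z), norm_weight,
      Real.norm_of_nonneg (sq_nonneg R)] at hcomm
    calc ‖U z * stencilCommutator s c (smoothCutoff R) g z‖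
        ≤ (B + ε * (L * R)) * (K * ((R ^ 2)⁻¹ * (weight z ^ (d - 1))⁻¹)) := by
          rw [norm_mul]
          gcongr
          exact (hU z).trans (by gcongr)
      _ = _ := by ring
  · rw [← Finset.sum_mul]
    have hsum := sum_inv_weight_pow_pred_le hd (X := 2 * (L * R)) (by nlinarith)
      fun z hz => (hS z hz).trans (by nlinarith)
    calc (∑ z ∈ S, (weight z ^ (d - 1))⁻¹) * ((B + ε * (L * R)) * (K * (R ^ 2)⁻¹))
        ≤ 4 * 5 ^ d * (2 * (L * R)) * ((B + ε * (L * R)) * (K * (R ^ 2)⁻¹)) := by gcongr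
      _ = 8 * 5 ^ d * L * K * B / R + 8 * 5 ^ d * L ^ 2 * K * ε := by field_simp; ring
      _ ≤ _ := by
          gcongr
          exact le_self_pow₀ hL two_ne_zero

lemma tendsto_tsum_mul_stencilCommutator (hd : 1 ≤ d) {s : ι → Fin d → ℤ} {c : ι → ℝ}
    (hc : ∀ i, ∑ t, c t * (s t i : ℝ) = 0) {g U : (Fin d → ℤ) → ℝ}
    (hg : HasDecayingDifferences (d - 1) g) (hU : U =o[cofinite] weight) :
    Tendsto (fun R => ∑' z, U z * stencilCommutator s c (smoothCutoff R) g z) atTop (𝓝 0) := by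
  obtain ⟨T, hT⟩ := exists_norm_tsum_mul_stencilCommutator_le hd hc hg
  refine NormedAddGroup.tendsto_nhds_zero.mpr fun δ hδ => ?_
  obtain ⟨ε, hε, hεδ⟩ := exists_pos_mul_lt hδ T
  obtain ⟨B, hB, hUB⟩ := exists_norm_le_add_mul_weight hU hε
  have hlim : Tendsto (fun R : ℝ => T * B / R + T * ε) atTop (𝓝 (0 + T * ε)) :=
    (tendsto_const_nhds.div_atTop tendsto_id).add_const _
  filter_upwards [hlim.eventually_lt_const (by rwa [zero_add]), eventually_ge_atTop 1] with R hlt hR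
  exact (hT U B ε hB hε.le hUB R hR).trans_lt hlt

/-- Symmetric systems of difference operators whose coefficients have vanishing first moments, so
that the commutator with a cutoff contains no first-order term. -/
structure IsSymmetricDriftFree (s : ι → Fin d → ℤ) (c : ν → ν → ι → ℝ) : Prop where
  symm : ∀ a b θ, stencilOp (-s) (c b a) θ = stencilOp s (c a b) θ
  sum_mul_eq_zero : ∀ a b i, ∑ t, c a b t * (s t i : ℝ) = 0

theorem IsSymmetricDriftFree.sum_tsum_mul_stencilSystem_comm (hd : 1 ≤ d) {s : ι → Fin d → ℤ}
    {c : ν → ν → ι → ℝ} (hc : IsSymmetricDriftFree s c) {U g : ν → (Fin d → ℤ) → ℝ}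
    (hU : ∀ a, U a =o[cofinite] weight) (hg : ∀ a, HasDecayingDifferences (d - 1) (g a))
    (hUg : ∀ a, Summable fun z => U a z * stencilSystem s c g a z)
    (hgU : ∀ a, Summable fun z => g a z * stencilSystem s c U a z) :
    ∑ a, ∑' z, U a z * stencilSystem s c g a z = ∑ a, ∑' z, g a z * stencilSystem s c U a z := by
  have hcomm : Tendsto (fun R => ∑ a, ∑ b, ∑' z, U a z *
      stencilCommutator s (c a b) (smoothCutoff R) (g b) z) atTop (𝓝 0) := by
    simpa only [Finset.sum_const_zero] using tendsto_finsetSum Finset.univ fun a _ =>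
      tendsto_finsetSum Finset.univ fun b _ =>
        tendsto_tsum_mul_stencilCommutator hd (hc.sum_mul_eq_zero a b) (hg b) (hU a)
  have hdiff := (tendsto_finsetSum Finset.univ fun a _ => tendsto_tsum_smoothCutoff_mul (hUg a)).sub
    (tendsto_finsetSum Finset.univ fun a _ => tendsto_tsum_smoothCutoff_mul (hgU a))
  refine sub_eq_zero.mp (tendsto_nhds_unique (hdiff.congr' ?_) hcomm)
  filter_upwards [eventually_ge_atTop 1] with R hR
  exact (sum_tsum_mul_stencilCommutator hc.symm (hasFiniteSupport_smoothCutoff hR) U g).symm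

lemma HasDecayingDifferences.comp_const_sub {q : ℕ} {g : (Fin d → ℤ) → ℝ}
    (hg : HasDecayingDifferences q g) (l : Fin d → ℤ) :
    HasDecayingDifferences q fun z => g (l - z) := by
  intro S
  have hshift := (slowlyVarying_inv_weight_pow (d := d) (q + S.card)) (-l)
  have hreflected := ((hg (S.map (-·))).comp_tendsto
    (tendsto_top : Tendsto (fun z => l - z) ⊤ ⊤))
  rw [Multiset.card_map] at hreflected
  refine (hreflected.trans (hshift.congr_left fun z => ?_)).congr_left fun z =>
    (iterDiff_comp_const_sub S g l z).symm
  rw [Function.comp_apply, ← weight_neg (l - z), neg_sub, sub_eq_add_neg]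

lemma summable_mul_of_isBigO_one {g f : (Fin d → ℤ) → ℝ} (hg : g =O[⊤] fun _ => (1 : ℝ))
    (hf : Summable f) : Summable fun m => g m * f m :=
  summable_of_isBigO hf.norm <| by
    simpa using
      ((hg.mono (le_top : cofinite ≤ ⊤)).mul (Asymptotics.isBigO_refl f cofinite)).norm_right

variable [DecidableEq ν] {s : ι → Fin d → ℤ} {c : ν → ν → ι → ℝ} {K U : ν → (Fin d → ℤ) → ℝ} {k : ν}

lemma stencilSystem_fwdDiff_const_sub
    (hK : ∀ a z, stencilSystem s c (fun b x => K b (-x)) a z = if z = 0 ∧ a = k then 1 else 0)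
    (ρ l : Fin d → ℤ) (a : ν) (z : Fin d → ℤ) :
    stencilSystem s c (fun b m => fwdDiff ρ (K b) (l - m)) a z =
      (if z = l + ρ ∧ a = k then 1 else 0) - if z = l ∧ a = k then 1 else 0 := by
  have h₁ := hK a (z - (l + ρ))
  have h₂ := hK a (z - l)
  simp only [sub_eq_zero] at h₁ h₂
  rw [← h₁, ← h₂]
  have hadd (x : Fin d → ℤ) : l - (z + x) + ρ = -(z - (l + ρ) + x) := by abel
  have hzero (x : Fin d → ℤ) : l - (z + x) = -(z - l + x) := by abel
  simp only [stencilSystem, stencilOp, ← Finset.sum_sub_distrib, ← mul_sub, fwdDiff]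
  simp_rw [hadd, hzero]

/-- The representation `D_ρ u = D_ρ 𝒢 * H[u]`, with `K` the reflected `k`-th column of `𝒢`. -/
theorem IsSymmetricDriftFree.fwdDiff_eq_sum_tsum (hd : 1 ≤ d) (hc : IsSymmetricDriftFree s c)
    (hKδ : ∀ a z, stencilSystem s c (fun b x => K b (-x)) a z = if z = 0 ∧ a = k then 1 else 0)
    (hK : ∀ b r, HasDecayingDifferences (d - 1) (fwdDiff r (K b)))
    (hU : ∀ a, U a =o[cofinite] weight) (hf : ∀ a, Summable (stencilSystem s c U a))
    (ρ l : Fin d → ℤ) :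
    fwdDiff ρ (U k) l = ∑ b, ∑' m, fwdDiff ρ (K b) (l - m) * stencilSystem s c U b m := by
  have hdecay (b : ν) := (hK b ρ).comp_const_sub l
  have hsource (a : ν) : HasSum
      (fun z => U a z * stencilSystem s c (fun b m => fwdDiff ρ (K b) (l - m)) a z)
      (if a = k then fwdDiff ρ (U a) l else 0) := by
    have hsingle (y : Fin d → ℤ) :
        HasSum (fun z => U a z * if z = y ∧ a = k then 1 else 0) (if a = k then U a y else 0) := by
      convert hasSum_single y fun z hz => ?_ using 1 <;> simp [*]
    have hvalue : (if a = k then U a (l + ρ) else 0) - (if a = k then U a l else 0) =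
        if a = k then fwdDiff ρ (U a) l else 0 := by
      split_ifs
      · rfl
      · exact sub_zero 0
    simp only [stencilSystem_fwdDiff_const_sub hKδ, mul_sub]
    exact hvalue ▸ (hsingle (l + ρ)).sub (hsingle l)
  rw [← hc.sum_tsum_mul_stencilSystem_comm hd hU hdecay (fun a => (hsource a).summable) fun a =>
    summable_mul_of_isBigO_one ((hdecay a).isBigO.trans (isBigO_inv_weight_pow_one _)) (hf a)]
  simp only [fun a => (hsource a).tsum_eq, Finset.sum_ite_eq', Finset.mem_univ, if_true]

end GreenRepresentation

/-! ### Decay of convolutions -/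

section Convolution

variable {d : ℕ}

lemma iterDiff_sum {M ν : Type*} [AddCommGroup M] (t : Finset ν) (F : ν → M → ℝ) (S : Multiset M) :
    iterDiff S (fun l => ∑ b ∈ t, F b l) = fun l => ∑ b ∈ t, iterDiff S (F b) l := by
  induction S using Multiset.induction_on with
  | empty => simp only [iterDiff_zero]
  | cons r S ih =>
    rw [iterDiff_cons, ih]
    funext l
    simp only [fwdDiff, iterDiff_cons, Finset.sum_sub_distrib]

lemma hasDecayingDifferences_iterDiff {q : ℕ} {g : (Fin d → ℤ) → ℝ}
    (hg : HasDecayingDifferences q g) (S : Multiset (Fin d → ℤ)) :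
    HasDecayingDifferences (q + S.card) (iterDiff S g) := by
  intro T
  rw [← iterDiff_add, add_assoc, add_comm S.card, ← Multiset.card_add]
  exact hg (T + S)

lemma HasDecayingDifferences.isBigO_one {q : ℕ} {g : (Fin d → ℤ) → ℝ}
    (hg : HasDecayingDifferences q g) : g =O[⊤] fun _ => (1 : ℝ) :=
  hg.isBigO.trans (isBigO_inv_weight_pow_one q)

lemma HasDecayingDifferences.iterDiff_tsum_mul {q : ℕ} {g f : (Fin d → ℤ) → ℝ}
    (hg : HasDecayingDifferences q g) (hf : Summable f) (S : Multiset (Fin d → ℤ)) :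
    iterDiff S (fun l => ∑' m, g (l - m) * f m) =
      fun l => ∑' m, iterDiff S g (l - m) * f m := by
  have hsummable (T : Multiset (Fin d → ℤ)) (l : Fin d → ℤ) :
      Summable fun m => iterDiff T g (l - m) * f m :=
    summable_mul_of_isBigO_one
      ((hasDecayingDifferences_iterDiff hg T).comp_const_sub l).isBigO_one hf
  induction S using Multiset.induction_on with
  | empty => simp only [iterDiff_zero]
  | cons r S ih =>
    rw [iterDiff_cons, ih]
    funext l
    simp only [fwdDiff, iterDiff_cons, sub_mul, ← sub_add_eq_add_sub]
    have hshift := hsummable S (l + r)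
    simp only [← sub_add_eq_add_sub] at hshift
    exact (hshift.tsum_sub (hsummable S l)).symm

lemma HasDecayingDifferences.isBigO_tsum_cutoff_mul (hd : 1 ≤ d) {p : ℕ}
    {g f : (Fin d → ℤ) → ℝ} (hg : HasDecayingDifferences (d - 1) g) {S : Multiset (Fin d → ℤ)}
    (hf : ∀ T, T.card ≤ S.card - 1 → iterDiff T f =O[⊤] fun z =>
      (weight z ^ (d + p + T.card) * Real.log (weight z))⁻¹) :
    (fun l => ∑' k, cutoff l k * iterDiff S g k * f (l - k)) =O[⊤] fun l =>
      (weight l ^ (d - 1 + p + S.card))⁻¹ := by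
  induction S using Multiset.induction_on with
  | empty =>
    exact isBigO_tsum_cutoff_mul_pred hd hg.isBigO
      ((hf 0 le_rfl).trans (isBigO_inv_weight_pow_mul_log _))
  | cons r T =>
    have hgr := hasDecayingDifferences_iterDiff hg {r}
    rw [Multiset.card_singleton, Nat.sub_add_cancel hd] at hgr
    rw [Multiset.card_cons, show d - 1 + p + (T.card + 1) = d + p + T.card by omega]
    rw [Multiset.card_cons, Nat.add_sub_cancel] at hf
    simp only [← Multiset.singleton_add, add_comm {r} T, iterDiff_add]
    exact isBigO_tsum_cutoff_mul_iterDiff hgr hf rfl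

/-- Away from the kernel's singularity the vanishing moments gain the factor `|l|⁻ᵖ`; near it the
differences can be moved to `f`. -/
theorem HasDecayingDifferences.isBigO_tsum_iterDiff_mul (hd : 1 ≤ d) {p : ℕ}
    {g f : (Fin d → ℤ) → ℝ} (hg : HasDecayingDifferences (d - 1) g)
    (hsummable : Summable fun m => weight m ^ p * |f m|)
    (hmoment : ∀ β : Fin d → ℕ, ∑ i, β i < p → HasSum (fun m => f m * multiChoose β m) 0)
    {S : Multiset (Fin d → ℤ)}
    (hf : ∀ T, T.card ≤ S.card - 1 → iterDiff T f =O[⊤] fun z =>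
      (weight z ^ (d + p + T.card) * Real.log (weight z))⁻¹) :
    (fun l => ∑' m, iterDiff S g (l - m) * f m) =O[⊤] fun l =>
      (weight l ^ (d - 1 + p + S.card))⁻¹ := by
  have hfar := isBigO_tsum_sub_tsum_cutoff (hasDecayingDifferences_iterDiff hg S) hsummable hmoment
  have hreindex (l : Fin d → ℤ) :
      ∑' m, cutoff l (l - m) * iterDiff S g (l - m) * f m =
        ∑' k, cutoff l k * iterDiff S g k * f (l - k) := by
    rw [← (Equiv.subLeft l).tsum_eq]
    simp
  rw [add_right_comm] at hfar
  refine (hfar.add (hg.isBigO_tsum_cutoff_mul hd hf)).congr_left fun l => ?_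
  rw [← hreindex, sub_add_cancel]

variable {ι ν : Type*} [Fintype ι] [Fintype ν] [DecidableEq ν] {s : ι → Fin d → ℤ}
  {c : ν → ν → ι → ℝ} {K U : ν → (Fin d → ℤ) → ℝ} {k : ν}

theorem IsSymmetricDriftFree.isBigO_iterDiff (hd : 1 ≤ d) (hc : IsSymmetricDriftFree s c)
    (hKδ : ∀ a z, stencilSystem s c (fun b x => K b (-x)) a z = if z = 0 ∧ a = k then 1 else 0)
    (hK : ∀ b r, HasDecayingDifferences (d - 1) (fwdDiff r (K b)))
    (hU : ∀ a, U a =o[cofinite] weight) {p : ℕ}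
    (hsummable : ∀ a, Summable fun m => weight m ^ p * |stencilSystem s c U a m|)
    (hmoment : ∀ a, ∀ β : Fin d → ℕ, ∑ i, β i < p →
      HasSum (fun m => stencilSystem s c U a m * multiChoose β m) 0)
    (ρ : Fin d → ℤ) {S : Multiset (Fin d → ℤ)}
    (hf : ∀ a T, T.card ≤ S.card - 1 → iterDiff T (stencilSystem s c U a) =O[⊤] fun z =>
      (weight z ^ (d + p + T.card) * Real.log (weight z))⁻¹) :
    iterDiff (ρ ::ₘ S) (U k) =O[⊤] fun l => (weight l ^ (d - 1 + p + S.card))⁻¹ := by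
  have hfsum (a : ν) := summable_of_summable_weight_pow_mul_abs (hsummable a)
  have hrep : iterDiff (ρ ::ₘ S) (U k) =
      fun l => ∑ b, ∑' m, iterDiff S (fwdDiff ρ (K b)) (l - m) * stencilSystem s c U b m := by
    rw [iterDiff_cons_eq_iterDiff_fwdDiff,
      funext (hc.fwdDiff_eq_sum_tsum hd hKδ hK hU hfsum ρ), iterDiff_sum]
    simp only [(hK _ ρ).iterDiff_tsum_mul (hfsum _)]
  rw [hrep]
  exact Asymptotics.IsBigO.fun_sum fun b _ =>
    (hK b ρ).isBigO_tsum_iterDiff_mul hd (hsummable b) (hmoment b) (hf b)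

end Convolution

/-! ### Lattice points -/

section LatticePoints

lemma sqrt_sum_sq_le {ι : Type*} {s : Finset ι} {x : ι → ℝ} (hx : ∀ i ∈ s, 0 ≤ x i) :
    √(∑ i ∈ s, x i ^ 2) ≤ ∑ i ∈ s, x i :=
  (Real.sqrt_le_left (Finset.sum_nonneg hx)).mpr (Finset.sum_sq_le_sq_sum_of_nonneg hx)

lemma abs_le_sqrt_sum_sq {ι : Type*} {s : Finset ι} (x : ι → ℝ) {i : ι} (hi : i ∈ s) :
    |x i| ≤ √(∑ i ∈ s, x i ^ 2) :=
  Real.abs_le_sqrt (Finset.single_le_sum (f := fun i => x i ^ 2) (fun _ _ => sq_nonneg _) hi)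

lemma enorm_nonneg {n : ℕ} (v : Vec n) : 0 ≤ enorm v := Real.sqrt_nonneg _

lemma enorm_le_sum_abs {n : ℕ} (v : Vec n) : enorm v ≤ ∑ i, |v i| := by
  simpa [enorm] using sqrt_sum_sq_le (s := Finset.univ) fun i _ => abs_nonneg (v i)

lemma abs_le_enorm {n : ℕ} (v : Vec n) (i : Fin n) : |v i| ≤ enorm v :=
  abs_le_sqrt_sum_sq v (Finset.mem_univ i)

lemma two_le_ang {n : ℕ} (v : Vec n) : 2 ≤ ang v :=
  le_add_of_nonneg_left (enorm_nonneg v)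

variable {d : ℕ}

lemma latticePt_add (A : Matrix (Fin d) (Fin d) ℝ) (z w : Fin d → ℤ) :
    latticePt d A (z + w) = latticePt d A z + latticePt d A w := by
  funext i
  simp only [latticePt, Pi.add_apply, Int.cast_add, mul_add, Finset.sum_add_distrib]

/-- The parametrization `z ↦ A z` of the lattice as a group homomorphism. -/
def latticePtHom (A : Matrix (Fin d) (Fin d) ℝ) : (Fin d → ℤ) →+ Vec d :=
  AddMonoidHom.mk' (latticePt d A) (latticePt_add A)

lemma latticePt_zero (A : Matrix (Fin d) (Fin d) ℝ) : latticePt d A 0 = 0 :=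
  map_zero (latticePtHom A)

lemma latticePt_neg (A : Matrix (Fin d) (Fin d) ℝ) (z : Fin d → ℤ) :
    latticePt d A (-z) = -latticePt d A z :=
  map_neg (latticePtHom A) z

lemma latticePt_sum (A : Matrix (Fin d) (Fin d) ℝ) {ι : Type*} (s : Finset ι)
    (w : ι → Fin d → ℤ) : latticePt d A (∑ i ∈ s, w i) = ∑ i ∈ s, latticePt d A (w i) :=
  map_sum (latticePtHom A) w s

lemma latticePt_zsmul (A : Matrix (Fin d) (Fin d) ℝ) (n : ℤ) (w : Fin d → ℤ) :
    latticePt d A (n • w) = (n : ℝ) • latticePt d A w :=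
  (map_zsmul (latticePtHom A) n w).trans (Int.cast_smul_eq_zsmul ℝ n _).symm

variable {A : Matrix (Fin d) (Fin d) ℝ}

lemma coord_eq_sum_inv_mul_latticePt (hA : IsUnit A.det) (z : Fin d → ℤ) (i : Fin d) :
    (z i : ℝ) = ∑ k, A⁻¹ i k * latticePt d A z k := by
  have h : A⁻¹.mulVec (A.mulVec fun j => (z j : ℝ)) = fun j => (z j : ℝ) := by
    rw [Matrix.mulVec_mulVec, Matrix.nonsing_inv_mul A hA, Matrix.one_mulVec]
  exact (congrFun h i).symm

lemma latticePt_injective (hA : IsUnit A.det) : Function.Injective (latticePt d A) := by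
  intro z w h
  funext i
  have hi := coord_eq_sum_inv_mul_latticePt hA z i
  rw [h, ← coord_eq_sum_inv_mul_latticePt hA w i] at hi
  exact_mod_cast hi

lemma latticePt_eq_zero_iff (hA : IsUnit A.det) {z : Fin d → ℤ} : latticePt d A z = 0 ↔ z = 0 := by
  rw [← latticePt_zero A, (latticePt_injective hA).eq_iff]

lemma closure_latticePt_preimage_eq_top (hA : IsUnit A.det) {R : Finset (Vec d)}
    (hRlat : ∀ ρ ∈ R, ρ ∈ Lattice d A)
    (hRspan : ∀ x ∈ Lattice d A, ∃ c : Vec d → ℤ, x = ∑ ρ ∈ R, (c ρ : ℝ) • ρ) :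
    AddSubgroup.closure {r | latticePt d A r ∈ R} = ⊤ := by
  refine eq_top_iff.mpr fun z _ => ?_
  obtain ⟨c, hc⟩ := hRspan _ ⟨z, rfl⟩
  choose r hr using fun ρ : R => hRlat ρ.1 ρ.2
  have hz : z = ∑ ρ ∈ R.attach, c ρ.1 • r ρ := by
    apply latticePt_injective hA
    simp only [latticePt_sum, latticePt_zsmul, hr]
    rw [hc, ← Finset.sum_attach]
  rw [hz]
  exact sum_mem fun ρ _ => zsmul_mem (AddSubgroup.subset_closure (by simp [hr])) _

lemma enorm_latticePt_le (A : Matrix (Fin d) (Fin d) ℝ) (z : Fin d → ℤ) :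
    enorm (latticePt d A z) ≤ (∑ i, ∑ j, |A i j|) * l1Norm z := by
  refine (enorm_le_sum_abs _).trans ?_
  simp only [Finset.sum_mul]
  refine Finset.sum_le_sum fun i _ => (Finset.abs_sum_le_sum_abs _ _).trans ?_
  refine Finset.sum_le_sum fun j _ => ?_
  rw [abs_mul]
  gcongr
  exact abs_le_l1Norm z j

lemma l1Norm_le (hA : IsUnit A.det) (z : Fin d → ℤ) :
    (l1Norm z : ℝ) ≤ (∑ i, ∑ j, |A⁻¹ i j|) * enorm (latticePt d A z) := by
  rw [cast_l1Norm]
  simp only [Finset.sum_mul]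
  refine Finset.sum_le_sum fun i _ => ?_
  rw [coord_eq_sum_inv_mul_latticePt hA]
  refine (Finset.abs_sum_le_sum_abs _ _).trans (Finset.sum_le_sum fun j _ => ?_)
  rw [abs_mul]
  gcongr
  exact abs_le_enorm _ j

lemma isTheta_ang_latticePt (hA : IsUnit A.det) :
    (fun z => ang (latticePt d A z)) =Θ[⊤] weight := by
  have hS (B : Matrix (Fin d) (Fin d) ℝ) : 0 ≤ ∑ i, ∑ j, |B i j| := by positivity
  have hang (z : Fin d → ℤ) : ‖ang (latticePt d A z)‖ = enorm (latticePt d A z) + 2 :=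
    Real.norm_of_nonneg (zero_le_two.trans (two_le_ang _))
  refine ⟨Asymptotics.isBigO_top.mpr ⟨(∑ i, ∑ j, |A i j|) + 1, fun z => ?_⟩,
    Asymptotics.isBigO_top.mpr ⟨(∑ i, ∑ j, |A⁻¹ i j|) + 1, fun z => ?_⟩⟩ <;>
  rw [norm_weight, hang, weight]
  · nlinarith [enorm_latticePt_le A z, hS A, Nat.cast_nonneg (α := ℝ) (l1Norm z)]
  · nlinarith [l1Norm_le hA z, hS A⁻¹, enorm_nonneg (latticePt d A z)]

lemma isTheta_ang_latticePt_rpow (hA : IsUnit A.det) {n : ℕ} {e : ℝ} (he : e = -n) :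
    (fun z => ang (latticePt d A z) ^ e) =Θ[⊤] fun z => (weight z ^ n)⁻¹ := by
  have hrpow (z : Fin d → ℤ) : ang (latticePt d A z) ^ e = (ang (latticePt d A z) ^ n)⁻¹ := by
    rw [he, Real.rpow_neg (zero_le_two.trans (two_le_ang _)), Real.rpow_natCast]
  simp only [hrpow]
  exact ((isTheta_ang_latticePt hA).pow n).inv

lemma isBigO_log_weight_log_ang (hA : IsUnit A.det) :
    (fun z => Real.log (weight z)) =O[⊤] fun z => Real.log (ang (latticePt d A z)) := by
  have hlog2 : 0 < Real.log 2 := Real.log_pos one_lt_two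
  obtain ⟨C, hC, hweight⟩ := (isTheta_ang_latticePt hA).2.exists_pos
  refine Asymptotics.isBigO_top.mpr ⟨|Real.log C| / Real.log 2 + 1, fun z => ?_⟩
  have hang := two_le_ang (latticePt d A z)
  have hlogang : Real.log 2 ≤ Real.log (ang (latticePt d A z)) := Real.log_le_log two_pos hang
  have hz := Asymptotics.isBigOWith_top.mp hweight z
  rw [norm_weight, Real.norm_of_nonneg (by linarith)] at hz
  rw [norm_log_weight, Real.norm_of_nonneg (by linarith)]
  calc Real.log (weight z) ≤ Real.log (C * ang (latticePt d A z)) :=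
        Real.log_le_log (weight_pos z) hz
    _ = Real.log C + Real.log (ang (latticePt d A z)) := Real.log_mul hC.ne' (by linarith)
    _ ≤ |Real.log C| / Real.log 2 * Real.log (ang (latticePt d A z)) +
          Real.log (ang (latticePt d A z)) := by
        gcongr
        refine (le_abs_self _).trans ((div_mul_cancel₀ _ hlog2.ne').symm.le.trans ?_)
        gcongr
    _ = _ := by ring

lemma isBigO_log_ang_rpow (hA : IsUnit A.det) {α : ℝ} (hα : α ≤ 0) :
    (fun z => Real.log (ang (latticePt d A z)) ^ α) =O[⊤] fun z => Real.log (weight z) ^ α := by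
  obtain ⟨K, hK, hlog⟩ := (isBigO_log_weight_log_ang hA).exists_pos
  refine Asymptotics.isBigO_top.mpr ⟨K⁻¹ ^ α, fun z => ?_⟩
  have hang : 0 < Real.log (ang (latticePt d A z)) :=
    Real.log_pos (one_lt_two.trans_le (two_le_ang _))
  have hweight := log_weight_pos z
  have hz := Asymptotics.isBigOWith_top.mp hlog z
  rw [Real.norm_of_nonneg hweight.le, Real.norm_of_nonneg hang.le] at hz
  rw [Real.norm_of_nonneg (by positivity), Real.norm_of_nonneg (by positivity),
    ← Real.mul_rpow (by positivity) hweight.le]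
  exact Real.rpow_le_rpow_of_nonpos (by positivity) ((inv_mul_le_iff₀ hK).mpr hz) hα

lemma isBigO_log_weight_rpow {α : ℝ} (hα : α ≤ -1) :
    (fun z : Fin d → ℤ => Real.log (weight z) ^ α) =O[⊤] fun z => (Real.log (weight z))⁻¹ := by
  have hlog2 : 0 < Real.log 2 := Real.log_pos one_lt_two
  refine Asymptotics.isBigO_top.mpr ⟨Real.log 2 ^ (α + 1), fun z => ?_⟩
  have hweight := log_weight_pos z
  rw [Real.norm_of_nonneg (by positivity), norm_inv, norm_log_weight, ← div_eq_mul_inv,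
    le_div_iff₀ hweight, ← Real.rpow_add_one hweight.ne']
  exact Real.rpow_le_rpow_of_nonpos hlog2 (Real.log_le_log two_pos (two_le_weight z)) (by linarith)

lemma isBigO_inv_weight_pow_mul_log_rpow {α : ℝ} (hα : α ≤ -1) (n : ℕ) :
    (fun z : Fin d → ℤ => (weight z ^ n)⁻¹ * Real.log (weight z) ^ α) =O[⊤]
      fun z => (weight z ^ n * Real.log (weight z))⁻¹ := by
  simp only [mul_inv]
  exact (Asymptotics.isBigO_refl _ _).mul (isBigO_log_weight_rpow hα)

lemma isBigO_of_le_ang_rpow_mul_log_rpow (hA : IsUnit A.det) {α : ℝ} (hα : α ≤ 0) {n : ℕ}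
    {c e : ℝ} (he : e = -n) {F : (Fin d → ℤ) → ℝ} (hF : ∀ z, ‖F z‖ ≤
      c * ang (latticePt d A z) ^ e * Real.log (ang (latticePt d A z)) ^ α) :
    F =O[⊤] fun z => (weight z ^ n)⁻¹ * Real.log (weight z) ^ α := by
  refine (Asymptotics.isBigO_top.mpr ⟨c, fun z => (hF z).trans ?_⟩).trans
    ((isTheta_ang_latticePt_rpow hA he).1.mul (isBigO_log_ang_rpow hA hα))
  have hang := two_le_ang (latticePt d A z)
  have : 0 < Real.log (ang (latticePt d A z)) := Real.log_pos (by linarith)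
  rw [Real.norm_of_nonneg (by positivity), mul_assoc]

end LatticePoints

/-! ### Difference arrays -/

section DifferenceArrays

variable {d N : ℕ} {A : Matrix (Fin d) (Fin d) ℝ} {R : Finset (Vec d)}

lemma DnormJ_nonneg (R : Finset (Vec d)) (j : ℕ) (u : Vec d → Vec N) (ℓ : Vec d) :
    0 ≤ DnormJ R j u ℓ :=
  Real.sqrt_nonneg _

lemma Dmulti_latticePt_apply {j : ℕ} (r : Fin j → Fin d → ℤ) (u : Vec d → Vec N) (z : Fin d → ℤ)
    (a : Fin N) :
    Dmulti (fun i => latticePt d A (r i)) u (latticePt d A z) a =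
      iterDiff (Finset.univ.val.map r) (fun z => u (latticePt d A z) a) z := by
  rw [iterDiff_map_apply_eq_sum_powerset, Finset.powerset_univ, Dmulti, Finset.sum_apply]
  simp only [latticePt_add, latticePt_sum, Pi.smul_apply, smul_eq_mul, Finset.card_univ,
    Fintype.card_fin]

lemma enorm_Dmulti_le_DnormJ {j : ℕ} (ρs : Fin j → R) (u : Vec d → Vec N) (ℓ : Vec d) :
    enorm (Dmulti (fun i => (ρs i : Vec d)) u ℓ) ≤ DnormJ R j u ℓ :=
  (le_abs_self _).trans <| abs_le_sqrt_sum_sq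
    (fun ρs : Fin j → R => enorm (Dmulti (fun i => (ρs i : Vec d)) u ℓ)) (Finset.mem_univ ρs)

lemma abs_iterDiff_le_DnormJ (u : Vec d → Vec N) (a : Fin N) {s : Multiset (Fin d → ℤ)}
    (hs : ∀ r ∈ s, latticePt d A r ∈ R) (z : Fin d → ℤ) :
    |iterDiff s (fun z => u (latticePt d A z) a) z| ≤ DnormJ R s.card u (latticePt d A z) := by
  induction s using Quotient.inductionOn with
  | h l =>
  have hl : (l : Multiset (Fin d → ℤ)) = Finset.univ.val.map l.get := by
    rw [Fin.univ_val_map, List.ofFn_get]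
  have hget (i : Fin l.length) : latticePt d A (l.get i) ∈ R := hs _ (List.get_mem l i)
  rw [Multiset.quot_mk_to_coe, Multiset.coe_card, hl, ← Dmulti_latticePt_apply]
  exact (abs_le_enorm _ a).trans
    (enorm_Dmulti_le_DnormJ (fun i => ⟨latticePt d A (l.get i), hget i⟩) u _)

lemma isBigO_iterDiff_of_isBigO_DnormJ (hR : AddSubgroup.closure {r | latticePt d A r ∈ R} = ⊤)
    {B : (Fin d → ℤ) → ℝ} (hB : SlowlyVarying B) {u : Vec d → Vec N} {n : ℕ}
    (hu : (fun z => DnormJ R n u (latticePt d A z)) =O[⊤] B) (a : Fin N)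
    {s : Multiset (Fin d → ℤ)} (hs : s.card = n) :
    iterDiff s (fun z => u (latticePt d A z) a) =O[⊤] B := by
  refine isBigO_iterDiff_of_closure_eq_top hR hB (fun t ht htR => ?_) hs
  subst ht
  exact (Asymptotics.isBigO_of_le _ fun z =>
    (abs_iterDiff_le_DnormJ u a htR z).trans (le_abs_self _)).trans hu

lemma isBigO_DnormJ (hRlat : ∀ ρ ∈ R, ρ ∈ Lattice d A) {u : Vec d → Vec N} {j : ℕ}
    {B : (Fin d → ℤ) → ℝ} (hu : ∀ a (s : Multiset (Fin d → ℤ)), s.card = j →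
      iterDiff s (fun z => u (latticePt d A z) a) =O[⊤] B) :
    (fun z => DnormJ R j u (latticePt d A z)) =O[⊤] B := by
  choose r hr using fun ρ : R => hRlat ρ.1 ρ.2
  have hsum : (fun z => ∑ ρs : Fin j → R, ∑ a, |iterDiff (Finset.univ.val.map fun i => r (ρs i))
      (fun z => u (latticePt d A z) a) z|) =O[⊤] B :=
    Asymptotics.IsBigO.fun_sum fun ρs _ => Asymptotics.IsBigO.fun_sum fun a _ =>
      (hu a _ (by simp)).norm_left
  refine (Asymptotics.isBigO_of_le _ fun z => ?_).trans hsum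
  rw [Real.norm_of_nonneg (DnormJ_nonneg _ _ _ _)]
  refine le_trans ?_ (le_abs_self _)
  refine (sqrt_sum_sq_le fun _ _ => enorm_nonneg _).trans (Finset.sum_le_sum fun ρs _ => ?_)
  refine (enorm_le_sum_abs _).trans_eq (Finset.sum_congr rfl fun a _ => ?_)
  rw [← Dmulti_latticePt_apply]
  simp only [hr]

lemma InH1.isLittleO_weight {u : Vec d → Vec N} (hu : InH1 A R u)
    (hR : AddSubgroup.closure {r | latticePt d A r ∈ R} = ⊤) (a : Fin N) :
    (fun z => u (latticePt d A z) a) =o[cofinite] weight := by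
  refine isLittleO_weight_of_tendsto_fwdDiff fun i =>
    tendsto_fwdDiff_of_closure_eq_top hR (fun r hr => ?_) _
  have hlim : Tendsto (fun z => √(Dnorm1Sq R u (latticePt d A z))) cofinite (𝓝 0) := by
    simpa using (Summable.tendsto_cofinite_zero hu).sqrt
  refine squeeze_zero_norm (fun z => ?_) hlim
  calc ‖fwdDiff r (fun z => u (latticePt d A z) a) z‖
      = |D1 (latticePt d A r) u (latticePt d A z) a| := by
        simp only [fwdDiff, D1, latticePt_add, Pi.sub_apply, Real.norm_eq_abs]
    _ ≤ |enorm (D1 (latticePt d A r) u (latticePt d A z))| :=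
        (abs_le_enorm _ a).trans (le_abs_self _)
    _ ≤ _ := abs_le_sqrt_sum_sq (fun ρ => enorm (D1 ρ u (latticePt d A z))) hr

end DifferenceArrays

/-! ### The lattice operator as a difference system -/

section ForceStencil

variable {κ V : Type*} [AddCommGroup V]

/-- The four offsets, for each pair `(σ, ρ)`, of the second difference `D_{-r σ} D_{r ρ}`. -/
def forceOffset (r : κ → V) : κ × κ × Fin 4 → V
  | (σ, ρ, i) => ![r ρ - r σ, -r σ, r ρ, 0] i

/-- The coefficients of `∑ C_{σρ} D_{-r σ} D_{r ρ}` at the points of `forceOffset`. -/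
def forceCoeff {ν : Type*} (C : κ → κ → ν → ν → ℝ) (a b : ν) : κ × κ × Fin 4 → ℝ
  | (σ, ρ, i) => C σ ρ a b * ![1, -1, -1, 1] i

lemma neg_forceOffset (r : κ → V) : -forceOffset r = forceOffset (-r) := by
  funext ⟨σ, ρ, i⟩
  fin_cases i <;> simp [forceOffset, sub_eq_add_neg, add_comm]

variable {ν : Type*} [Fintype κ] (r : κ → V) (C : κ → κ → ν → ν → ℝ)

lemma stencilOp_force (a b : ν) (f : V → ℝ) (z : V) :
    stencilOp (forceOffset r) (forceCoeff C a b) f z =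
      ∑ σ, ∑ ρ, C σ ρ a b * fwdDiff (-r σ) (fwdDiff (r ρ) f) z := by
  simp only [stencilOp, Fintype.sum_prod_type]
  refine Finset.sum_congr rfl fun σ _ => Finset.sum_congr rfl fun ρ _ => ?_
  simp only [Fin.sum_univ_four, forceOffset, forceCoeff, fwdDiff, Matrix.cons_val, add_zero,
    show z + (r ρ - r σ) = z + -r σ + r ρ by abel]
  ring

lemma isSymmetricDriftFree_force {d : ℕ} (r : κ → Fin d → ℤ)
    (hC : ∀ σ ρ a b, C σ ρ a b = C ρ σ b a) :
    IsSymmetricDriftFree (forceOffset r) (forceCoeff C) where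
  symm a b θ := by
    funext z
    rw [neg_forceOffset, stencilOp_force, stencilOp_force, Finset.sum_comm]
    refine Finset.sum_congr rfl fun σ _ => Finset.sum_congr rfl fun ρ _ => ?_
    rw [hC, fwdDiff_leftCommutative.left_comm]
    simp only [Pi.neg_apply, neg_neg]
  sum_mul_eq_zero a b i := by
    have h := stencilOp_force r C a b (fun x => (x i : ℝ)) 0
    simp only [stencilOp, zero_add] at h
    rw [h]
    simp [fwdDiff]

lemma Hop_latticePt {d N : ℕ} {A : Matrix (Fin d) (Fin d) ℝ} {R : Finset (Vec d)}
    (C : Vec d → Vec d → Fin N → Fin N → ℝ) {r : R → Fin d → ℤ}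
    (hr : ∀ ρ, latticePt d A (r ρ) = ρ) (u : Vec d → Vec N) (z : Fin d → ℤ) (a : Fin N) :
    Hop d N R C u (latticePt d A z) a = stencilSystem (forceOffset r)
      (forceCoeff fun σ ρ : R => C σ ρ) (fun b z => u (latticePt d A z) b) a z := by
  have hdiff (σ ρ : R) (b : Fin N) :
      D1 ρ u (latticePt d A z - σ) b - D1 ρ u (latticePt d A z) b =
        fwdDiff (-r σ) (fwdDiff (r ρ) fun z => u (latticePt d A z) b) z := by
    simp only [fwdDiff, D1, latticePt_add, latticePt_neg, hr, sub_eq_add_neg, Pi.add_apply,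
      Pi.neg_apply]
  simp only [Hop, ← Finset.sum_coe_sort R, Finset.sum_apply, Pi.sub_apply, mulV,
    ← Finset.sum_sub_distrib, ← mul_sub, hdiff, stencilSystem, stencilOp_force]
  symm
  rw [Finset.sum_comm]
  exact Finset.sum_congr rfl fun σ _ => Finset.sum_comm
end ForceStencil

/-! ### Moments -/

section Moments

variable {d : ℕ} {A : Matrix (Fin d) (Fin d) ℝ}

/-- Polynomials of degree at most `k` in the coordinates of the lattice point `A z`, as functions
of `z`. -/
def latticePolynomials (A : Matrix (Fin d) (Fin d) ℝ) (k : ℕ) : Submodule ℝ ((Fin d → ℤ) → ℝ) :=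
  Submodule.span ℝ
    {h | ∃ i ≤ k, ∃ js : Fin i → Fin d, h = fun z => ∏ m, latticePt d A z (js m)}

lemma latticePolynomials_mono : Monotone (latticePolynomials A) := by
  refine fun k k' hk => Submodule.span_mono ?_
  rintro _ ⟨i, hi, js, rfl⟩
  exact ⟨i, hi.trans hk, js, rfl⟩

lemma latticePt_mul_mem_latticePolynomials (i : Fin d) {k : ℕ} {h : (Fin d → ℤ) → ℝ}
    (hh : h ∈ latticePolynomials A k) :
    (fun z => latticePt d A z i * h z) ∈ latticePolynomials A (k + 1) := by
  suffices latticePolynomials A k ≤ (latticePolynomials A (k + 1)).comap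
      (LinearMap.mulLeft ℝ fun z => latticePt d A z i) from this hh
  refine Submodule.span_le.mpr ?_
  rintro _ ⟨n, hn, js, rfl⟩
  refine Submodule.subset_span ⟨n + 1, by omega, Fin.cons i js, ?_⟩
  funext z
  simp [Fin.prod_univ_succ]

lemma coord_mul_mem_latticePolynomials (hA : IsUnit A.det) (i : Fin d) {k : ℕ}
    {h : (Fin d → ℤ) → ℝ} (hh : h ∈ latticePolynomials A k) :
    (fun z => (z i : ℝ) * h z) ∈ latticePolynomials A (k + 1) := by
  have hcoord : (fun z => (z i : ℝ) * h z) =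
      ∑ m, A⁻¹ i m • fun z => latticePt d A z m * h z := by
    funext z
    simp only [coord_eq_sum_inv_mul_latticePt hA z i, Finset.sum_apply, Finset.sum_mul,
      Pi.smul_apply, smul_eq_mul, mul_assoc]
  rw [hcoord]
  exact sum_mem fun m _ => Submodule.smul_mem _ _ (latticePt_mul_mem_latticePolynomials m hh)

lemma choose_mul_mem_latticePolynomials (hA : IsUnit A.det) (i : Fin d) (b : ℕ) {k : ℕ}
    {h : (Fin d → ℤ) → ℝ} (hh : h ∈ latticePolynomials A k) :
    (fun z => Ring.choose (z i : ℝ) b * h z) ∈ latticePolynomials A (k + b) := by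
  induction b with
  | zero => simpa using hh
  | succ b ih =>
    rw [← add_assoc]
    convert Submodule.smul_mem _ ((b + 1 : ℝ)⁻¹) <| sub_mem
      (coord_mul_mem_latticePolynomials hA i ih)
      (Submodule.smul_mem _ (b : ℝ) (latticePolynomials_mono (Nat.le_succ (k + b)) ih)) using 1
    funext z
    simp only [ring_choose_succ, Pi.smul_apply, Pi.sub_apply, smul_eq_mul]
    ring

lemma multiChoose_mem_latticePolynomials (hA : IsUnit A.det) (β : Fin d → ℕ) :
    multiChoose β ∈ latticePolynomials A (∑ i, β i) := by
  suffices ∀ T : Finset (Fin d), (fun z => ∏ i ∈ T, Ring.choose (z i : ℝ) (β i)) ∈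
      latticePolynomials A (∑ i ∈ T, β i) from this Finset.univ
  intro T
  induction T using Finset.induction_on with
  | empty => exact Submodule.subset_span ⟨0, le_rfl, Fin.elim0, by simp⟩
  | insert a T ha ih =>
    simp only [Finset.prod_insert ha, Finset.sum_insert ha, add_comm (β a)]
    exact choose_mul_mem_latticePolynomials hA a (β a) ih

lemma hasSum_mul_eq_zero_of_mem_latticePolynomials {F : (Fin d → ℤ) → ℝ} {k : ℕ}
    (hmoment : ∀ i ≤ k, ∀ js : Fin i → Fin d,
      HasSum (fun z => F z * ∏ m, latticePt d A z (js m)) 0)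
    {h : (Fin d → ℤ) → ℝ} (hh : h ∈ latticePolynomials A k) : HasSum (fun z => F z * h z) 0 := by
  induction hh using Submodule.span_induction with
  | mem x hx =>
    obtain ⟨n, hn, js, rfl⟩ := hx
    exact hmoment n hn js
  | zero => simp
  | add x y _ _ hx hy => simpa [mul_add] using hx.add hy
  | smul c x _ hx => simpa [mul_left_comm] using hx.mul_left c

end Moments

/-! ### The lattice Green's function -/

section GreenFunction

variable {d N : ℕ} {A : Matrix (Fin d) (Fin d) ℝ} {R : Finset (Vec d)}
  {C : Vec d → Vec d → Fin N → Fin N → ℝ} {G : Vec d → Fin N → Fin N → ℝ}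

lemma DnormJ_col_le_DnormJmat (R : Finset (Vec d)) (j : ℕ) (G : Vec d → Fin N → Fin N → ℝ)
    (k : Fin N) (ℓ : Vec d) : DnormJ R j (col G k) ℓ ≤ DnormJmat R j G ℓ :=
  (le_abs_self _).trans <|
    abs_le_sqrt_sum_sq (fun k => DnormJ R j (col G k) ℓ) (Finset.mem_univ k)

lemma IsLatticeGreen.isBigO_DnormJ_col (hd : 1 ≤ d) (hA : IsUnit A.det)
    (hG : IsLatticeGreen d N A R C G) (k : Fin N) (n : ℕ) :
    (fun z => DnormJ R (n + 1) (col G k) (latticePt d A z)) =O[⊤] fun z =>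
      (weight z ^ (d - 1 + n))⁻¹ := by
  obtain ⟨c, hc⟩ := hG.2 (n + 1) (Nat.le_add_left 1 n)
  have hexp : (2 : ℝ) - d - (n + 1 : ℕ) = -(d - 1 + n : ℕ) := by
    push_cast [Nat.cast_sub hd]
    ring
  refine (Asymptotics.isBigO_top.mpr ⟨c, fun z => ?_⟩).trans (isTheta_ang_latticePt_rpow hA hexp).1
  have := two_le_ang (latticePt d A z)
  rw [Real.norm_of_nonneg (DnormJ_nonneg _ _ _ _), Real.norm_of_nonneg (by positivity)]
  exact (DnormJ_col_le_DnormJmat R _ G k _).trans (hc z)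

lemma IsLatticeGreen.hasDecayingDifferences_fwdDiff (hd : 1 ≤ d) (hA : IsUnit A.det)
    (hR : AddSubgroup.closure {r | latticePt d A r ∈ R} = ⊤) (hG : IsLatticeGreen d N A R C G)
    (b k : Fin N) (r : Fin d → ℤ) :
    HasDecayingDifferences (d - 1) (fwdDiff r fun z => G (latticePt d A z) b k) := fun s => by
  rw [← iterDiff_cons_eq_iterDiff_fwdDiff]
  exact isBigO_iterDiff_of_isBigO_DnormJ hR (slowlyVarying_inv_weight_pow _)
    (hG.isBigO_DnormJ_col hd hA k s.card) b (Multiset.card_cons r s)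

lemma IsLatticeGreen.hasDecayingDifferences_fwdDiff_neg (hd : 1 ≤ d) (hA : IsUnit A.det)
    (hR : AddSubgroup.closure {r | latticePt d A r ∈ R} = ⊤) (hG : IsLatticeGreen d N A R C G)
    (b k : Fin N) (r : Fin d → ℤ) :
    HasDecayingDifferences (d - 1) (fwdDiff r fun z => G (latticePt d A (-z)) b k) := by
  convert (hG.hasDecayingDifferences_fwdDiff hd hA hR b k (-r)).comp_const_sub 0 using 2
  simp only [fwdDiff, neg_add, zero_sub]

lemma IsLatticeGreen.stencilSystem_eq (hA : IsUnit A.det) (hG : IsLatticeGreen d N A R C G)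
    {r : R → Fin d → ℤ} (hr : ∀ ρ, latticePt d A (r ρ) = ρ) (k a : Fin N) (z : Fin d → ℤ) :
    stencilSystem (forceOffset r) (forceCoeff fun σ ρ : R => C σ ρ)
      (fun b z => G (latticePt d A z) b k) a z = if z = 0 ∧ a = k then 1 else 0 := by
  refine (Hop_latticePt C hr (col G k) z a).symm.trans ?_
  simp only [hG.1, latticePt_eq_zero_iff hA]
  by_cases hz : z = 0 <;> simp [hz, Pi.single_apply]

end GreenFunction

/-! ### Decay -/

section Decay

variable {d N : ℕ} {A : Matrix (Fin d) (Fin d) ℝ} {R : Finset (Vec d)} {u F : Vec d → Vec N}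
  {p : ℕ} {α c : ℝ}

lemma isBigO_inv_weight_mul_log_rpow_of_enorm_le (hA : IsUnit A.det) (hα : α ≤ 0)
    (hbound : ∀ z, enorm (F (latticePt d A z)) ≤ c * ang (latticePt d A z) ^ (-(d : ℝ) - p) *
      Real.log (ang (latticePt d A z)) ^ α) (a : Fin N) :
    (fun z => F (latticePt d A z) a) =O[⊤] fun z =>
      (weight z ^ (d + p))⁻¹ * Real.log (weight z) ^ α :=
  isBigO_of_le_ang_rpow_mul_log_rpow hA hα (by push_cast; ring)
    fun z => (abs_le_enorm _ a).trans (hbound z)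

lemma summable_weight_pow_mul_abs_of_enorm_le (hA : IsUnit A.det) (hα : α < -1)
    (hbound : ∀ z, enorm (F (latticePt d A z)) ≤ c * ang (latticePt d A z) ^ (-(d : ℝ) - p) *
      Real.log (ang (latticePt d A z)) ^ α) (a : Fin N) :
    Summable fun z => weight z ^ p * |F (latticePt d A z) a| := by
  refine summable_of_isBigO (summable_inv_weight_pow_mul_log_rpow hα) <|
    Asymptotics.IsBigO.mono ?_ le_top
  refine ((Asymptotics.isBigO_refl (fun z => weight z ^ p) ⊤).mul
    (isBigO_inv_weight_mul_log_rpow_of_enorm_le hA (by linarith) hbound a).norm_left).congr_right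
    fun z => ?_
  have := weight_pos z
  field_simp
  ring

lemma isBigO_iterDiff_of_DnormJ_le (hA : IsUnit A.det)
    (hR : AddSubgroup.closure {r | latticePt d A r ∈ R} = ⊤) (hα : α ≤ -1)
    (hbound : ∀ z, enorm (F (latticePt d A z)) ≤ c * ang (latticePt d A z) ^ (-(d : ℝ) - p) *
      Real.log (ang (latticePt d A z)) ^ α) {n : ℕ}
    (hD : ∀ m : ℕ, 1 ≤ m → m ≤ n → ∀ z, DnormJ R m F (latticePt d A z) ≤
      c * ang (latticePt d A z) ^ (-(d : ℝ) - p - m) * Real.log (ang (latticePt d A z)) ^ α)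
    (a : Fin N) {T : Multiset (Fin d → ℤ)} (hT : T.card ≤ n) :
    iterDiff T (fun z => F (latticePt d A z) a) =O[⊤] fun z =>
      (weight z ^ (d + p + T.card) * Real.log (weight z))⁻¹ := by
  rcases T.empty_or_exists_mem with rfl | ⟨r, hr⟩
  · exact (isBigO_inv_weight_mul_log_rpow_of_enorm_le hA (by linarith) hbound a).trans
      (isBigO_inv_weight_pow_mul_log_rpow hα _)
  · have hexp : -(d : ℝ) - p - T.card = -(d + p + T.card : ℕ) := by
      push_cast
      ring
    have hcard := Multiset.card_pos_iff_exists_mem.mpr ⟨r, hr⟩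
    have hDT : (fun z => DnormJ R T.card F (latticePt d A z)) =O[⊤] fun z =>
        (weight z ^ (d + p + T.card))⁻¹ * Real.log (weight z) ^ α :=
      isBigO_of_le_ang_rpow_mul_log_rpow hA (by linarith) hexp fun z =>
        (Real.norm_of_nonneg (DnormJ_nonneg _ _ _ _)).trans_le (hD _ hcard hT z)
    exact isBigO_iterDiff_of_isBigO_DnormJ hR (slowlyVarying_inv_weight_pow_mul_log _)
      (hDT.trans (isBigO_inv_weight_pow_mul_log_rpow hα _)) a rfl

lemma exists_DnormJ_le_of_isBigO_iterDiff (hA : IsUnit A.det)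
    (hRlat : ∀ ρ ∈ R, ρ ∈ Lattice d A) {j n : ℕ} {e : ℝ} (he : e = -n)
    (hu : ∀ a (s : Multiset (Fin d → ℤ)), s.card = j →
      iterDiff s (fun z => u (latticePt d A z) a) =O[⊤] fun z => (weight z ^ n)⁻¹) :
    ∃ K, ∀ z, DnormJ R j u (latticePt d A z) ≤ K * ang (latticePt d A z) ^ e := by
  obtain ⟨K, hK⟩ := Asymptotics.isBigO_top.mp <|
    (isBigO_DnormJ hRlat hu).trans (isTheta_ang_latticePt_rpow hA he).2
  refine ⟨K, fun z => (le_abs_self _).trans ((hK z).trans_eq ?_)⟩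
  have := two_le_ang (latticePt d A z)
  rw [Real.norm_of_nonneg (by positivity)]

end Decay

theorem decay_with_vanishing_moments_neg_alpha_general
    {d N : ℕ} (hd : 1 ≤ d) {A : Matrix (Fin d) (Fin d) ℝ} (hA : IsUnit A.det)
    {R : Finset (Vec d)} (hRlat : ∀ ρ ∈ R, ρ ∈ Lattice d A)
    (hRspan : ∀ x ∈ Lattice d A, ∃ c : Vec d → ℤ, x = ∑ ρ ∈ R, (c ρ : ℝ) • ρ)
    {C : Vec d → Vec d → Fin N → Fin N → ℝ} (hCsym : ∀ σ ρ i j, C σ ρ i j = C ρ σ j i)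
    {G : Vec d → Fin N → Fin N → ℝ} (hG : IsLatticeGreen d N A R C G)
    {u : Vec d → Vec N} (hu : InH1 A R u) {p : ℕ} {α : ℝ} (hα : α < -1) {c : ℝ}
    (hbound : ∀ z : Fin d → ℤ, enorm (Hop d N R C u (latticePt d A z)) ≤
      c * ang (latticePt d A z) ^ (-(d : ℝ) - p) * Real.log (ang (latticePt d A z)) ^ α)
    (hmom : ∀ i : ℕ, i < p → ∀ (a : Fin N) (js : Fin i → Fin d), HasSum (fun z : Fin d → ℤ =>
      Hop d N R C u (latticePt d A z) a * ∏ m, latticePt d A z (js m)) 0)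
    {j : ℕ} (hj : 1 ≤ j)
    (hD : ∀ m : ℕ, 1 ≤ m → m ≤ j - 2 → ∀ z : Fin d → ℤ,
      DnormJ R m (Hop d N R C u) (latticePt d A z) ≤
        c * ang (latticePt d A z) ^ (-(d : ℝ) - p - m) * Real.log (ang (latticePt d A z)) ^ α) :
    ∃ Cj : ℝ, ∀ z : Fin d → ℤ, DnormJ R j u (latticePt d A z) ≤
      Cj * ang (latticePt d A z) ^ ((2 : ℝ) - d - p - j) := by
  have hR := closure_latticePt_preimage_eq_top hA hRlat hRspan
  choose r hr using fun ρ : R => hRlat ρ.1 ρ.2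
  have hsymm : IsSymmetricDriftFree (forceOffset r) (forceCoeff fun σ ρ : R => C σ ρ) :=
    isSymmetricDriftFree_force _ r fun σ ρ => hCsym σ ρ
  have hf (a : Fin N) : stencilSystem (forceOffset r) (forceCoeff fun σ ρ : R => C σ ρ)
      (fun b z => u (latticePt d A z) b) a = fun z => Hop d N R C u (latticePt d A z) a :=
    funext fun z => (Hop_latticePt C hr u z a).symm
  refine exists_DnormJ_le_of_isBigO_iterDiff (n := d - 1 + p + (j - 1)) hA hRlat ?_ fun k s hs => ?_
  · push_cast [Nat.cast_sub hd, Nat.cast_sub hj]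
    ring
  obtain ⟨ρ, hρ⟩ := Multiset.card_pos_iff_exists_mem.mp (hs ▸ hj)
  obtain ⟨S, rfl⟩ := Multiset.exists_cons_of_mem hρ
  have hS : S.card = j - 1 := by rw [← hs, Multiset.card_cons, Nat.add_sub_cancel]
  rw [← hS]
  refine hsymm.isBigO_iterDiff (p := p)
    (U := fun b z => u (latticePt d A z) b) (K := fun b z => G (latticePt d A (-z)) b k) hd ?_
    (hG.hasDecayingDifferences_fwdDiff_neg hd hA hR · k ·) (hu.isLittleO_weight hR)
    ?_ ?_ ρ ?_
  · simpa only [neg_neg] using hG.stencilSystem_eq hA hr k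
  · simpa only [hf] using summable_weight_pow_mul_abs_of_enorm_le hA hα hbound
  · intro a β hβ
    rw [hf]
    exact hasSum_mul_eq_zero_of_mem_latticePolynomials (fun i hi => hmom i (by omega) a)
      (multiChoose_mem_latticePolynomials hA β)
  · intro a T hT
    rw [hf]
    exact isBigO_iterDiff_of_DnormJ_le hA hR hα.le hbound hD a (by omega)

/-- Remark: no logarithmic factor when `α < -1`. -/
theorem decay_with_vanishing_moments_neg_alpha
    (d N : ℕ) (hd : 2 ≤ d)
    (A : Matrix (Fin d) (Fin d) ℝ) (hA : IsUnit A.det)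
    (R : Finset (Vec d)) (hR0 : (0 : Vec d) ∉ R)
    (hRlat : ∀ ρ ∈ R, ρ ∈ Lattice d A)
    (hRsym : ∀ ρ ∈ R, -ρ ∈ R)
    (hRspan : ∀ x ∈ Lattice d A, ∃ c : Vec d → ℤ, x = ∑ ρ ∈ R, (c ρ : ℝ) • ρ)
    (C : Vec d → Vec d → Fin N → Fin N → ℝ)
    (hCsym : ∀ σ ρ i j, C σ ρ i j = C ρ σ j i)
    (hCpt : ∀ σ ρ, C σ ρ = C (-σ) (-ρ))
    (hstab : IsStable d N A R C)
    (G : Vec d → Fin N → Fin N → ℝ) (hG : IsLatticeGreen d N A R C G)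
    (u : Vec d → Vec N) (hu : InH1 A R u)
    (p : ℕ) (α : ℝ) (hα : α < -1) (c : ℝ) (hc : 0 < c)
    (hbound : ∀ z : Fin d → ℤ,
      enorm (Hop d N R C u (latticePt d A z)) ≤
        c * ang (latticePt d A z) ^ (-(d : ℝ) - p) *
          Real.log (ang (latticePt d A z)) ^ α)
    (hmom : ∀ i : ℕ, i < p → ∀ (a : Fin N) (js : Fin i → Fin d),
      HasSum (fun z : Fin d → ℤ =>
        Hop d N R C u (latticePt d A z) a * ∏ m, latticePt d A z (js m)) 0) :
    (∀ j : ℕ, j = 1 ∨ j = 2 → ∃ Cj : ℝ, ∀ z : Fin d → ℤ,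
        DnormJ R j u (latticePt d A z) ≤
          Cj * ang (latticePt d A z) ^ ((2 : ℝ) - d - p - j)) ∧
    (∀ j : ℕ, 3 ≤ j →
      (∀ m : ℕ, 1 ≤ m → m ≤ j - 2 → ∀ z : Fin d → ℤ,
          DnormJ R m (Hop d N R C u) (latticePt d A z) ≤
            c * ang (latticePt d A z) ^ (-(d : ℝ) - p - m) *
              Real.log (ang (latticePt d A z)) ^ α) →
      ∃ Cj : ℝ, ∀ z : Fin d → ℤ,
        DnormJ R j u (latticePt d A z) ≤
          Cj * ang (latticePt d A z) ^ ((2 : ℝ) - d - p - j)) := by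
  refine ⟨fun j hj => ?_, fun j hj hD => ?_⟩
  · exact decay_with_vanishing_moments_neg_alpha_general (by omega) hA hRlat hRspan hCsym hG hu hα
      hbound hmom (by omega) fun m hm hmj => by omega
  · exact decay_with_vanishing_moments_neg_alpha_general (by omega) hA hRlat hRspan hCsym hG hu hα
      hbound hmom (by omega) hD

end Defect
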